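/- arXiv:1312.4597 — 3 statements merged into one kernel-verified Lean document; each statement's English description precedes it below -/
import Mathlib

section
/- Let S be a convex polygon in the plane with at least four sides, and let m ≥ 1 be an integer. Then there exists an indexed family of positive homothetic copies of S that forms an m-fold covering of the plane ℝ² and that cannot be decomposed into two coverings. -/
/-!
STATEMENT 0: Let S be a convex polygon in the plane with at least four sides
(the convex hull of a finite set of at least four points in strictly convex
position) and let m ≥ 1. Then there exists an indexed family of positive
homothetic copies of S that forms an m-fold covering of ℝ² and that cannot be
decomposed into two coverings.
-/

noncomputable section

abbrev Plane : Type := EuclideanSpace ℝ (Fin 2)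

/-- The homothetic copy `ε·S + p` of a set `S ⊆ ℝ²`. -/
def homCopy (ε : ℝ) (p : Plane) (S : Set Plane) : Set Plane :=
  (fun x => ε • x + p) '' S

/-- The family `C` covers every point of `A` at least `m` times. -/
def MFoldCover {I : Type*} (m : ℕ) (C : I → Set Plane) (A : Set Plane) : Prop :=
  ∀ a ∈ A, ∃ t : Finset I, m ≤ t.card ∧ ∀ i ∈ t, a ∈ C i

/-- The family `C` can be decomposed into two coverings of the plane. -/
def DecomposableIntoTwoCoverings {I : Type*} (C : I → Set Plane) : Prop :=
  ∃ I₁ : Set I, (∀ x : Plane, ∃ i ∈ I₁, x ∈ C i) ∧ (∀ x : Plane, ∃ i ∈ I₁ᶜ, x ∈ C i)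

/-- Every point of the finite set `P` is an extreme point of its convex hull. -/
def StrictlyConvexPosition (P : Finset Plane) : Prop :=
  ∀ p ∈ P, p ∈ Set.extremePoints ℝ (convexHull ℝ (P : Set Plane))

/-!
Let `A` and `B` be extreme points of a polytope `S` such that the open segment between them runs
through the interior of `S`, and put `d = B - A`. Near `A` and `B` the polytope agrees with closed
salient cones `K` and `K'`, where `d` is interior to `K` and `-d` is interior to `K'`. A homothet of
`S` close to `S` is determined by the displacement `η • p` of its corner over `A` and by a change of
scale `η * s`, and then its corner over `B` is displaced by `η • (p + s • d)`. The incidences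
between such homothets and points near `A` or `B` are therefore those of translates of `K` and `K'`,
which can be slid along `d` independently of each other.

This freedom is used to realize a finite hypergraph with two kinds of edges, all of size at least
`m` and given by points near `A` and near `B` respectively, such that any splitting of the vertices
into a red and a blue part leaves an edge of the first kind within the red part or one of the second
kind within the blue part. The hypergraph for the edge sizes `(k + 1, l + 1)` arises from those for
`(k, l + 1)` and `(k + 1, l)` by adding one vertex. Tiny homothets that avoid the
finitely many chosen points cover the rest of the space.

In the plane, if none of the segments from an extreme point `A` to three others met the interior,
the functionals supporting `S` along them would make the three directions linearly independent.
-/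

open Filter Topology Pointwise

universe u

section Hypergraph

/-- A finite hypergraph on `V` with red edges indexed by `R` and blue edges indexed by `B`. In the
application the vertices are homothetic copies and each edge consists of the copies that contain
one given point. -/
structure RedBlueHypergraph where
  V : Type
  R : Type
  B : Type
  finite_V : Finite V
  finite_R : Finite R
  finite_B : Finite B
  red : R → Set V
  blue : B → Set V

namespace RedBlueHypergraph

attribute [instance] finite_V finite_R finite_B

/-- The hypergraph has edges of size at least `k` (red) and `l` (blue), and every set `T` of
vertices contains a red edge or misses a blue edge: if the vertices of `T` are coloured red and
the others blue, some edge is monochromatic in its own colour. -/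
structure IsUnsplittable (H : RedBlueHypergraph) (k l : ℕ) : Prop where
  le_encard_red : ∀ e, (k : ℕ∞) ≤ (H.red e).encard
  le_encard_blue : ∀ e, (l : ℕ∞) ≤ (H.blue e).encard
  exists_monochromatic : ∀ T : Set H.V, (∃ e, H.red e ⊆ T) ∨ ∃ e, H.blue e ⊆ Tᶜ

/-- The disjoint union of `H₁` and `H₂` with one new vertex `none`, which is added to the red edges
of `H₁` and to the blue edges of `H₂`. -/
def join (H₁ H₂ : RedBlueHypergraph) : RedBlueHypergraph where
  V := Option (H₁.V ⊕ H₂.V)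
  R := H₁.R ⊕ H₂.R
  B := H₁.B ⊕ H₂.B
  finite_V := inferInstance
  finite_R := inferInstance
  finite_B := inferInstance
  red := Sum.elim (fun e => insert none ((fun v => some (Sum.inl v)) '' H₁.red e))
    (fun e => (fun v => some (Sum.inr v)) '' H₂.red e)
  blue := Sum.elim (fun e => (fun v => some (Sum.inl v)) '' H₁.blue e)
    (fun e => insert none ((fun v => some (Sum.inr v)) '' H₂.blue e))

lemma IsUnsplittable.join {H₁ H₂ : RedBlueHypergraph} {k l : ℕ} (h₁ : H₁.IsUnsplittable k (l + 1))
    (h₂ : H₂.IsUnsplittable (k + 1) l) : (H₁.join H₂).IsUnsplittable (k + 1) (l + 1) := by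
  have encard_inl (A : Set H₁.V) :
      ((fun v => some (Sum.inl v) : H₁.V → Option (H₁.V ⊕ H₂.V)) '' A).encard = A.encard :=
    ((Option.some_injective _).comp Sum.inl_injective).encard_image A
  have encard_inr (A : Set H₂.V) :
      ((fun v => some (Sum.inr v) : H₂.V → Option (H₁.V ⊕ H₂.V)) '' A).encard = A.encard :=
    ((Option.some_injective _).comp Sum.inr_injective).encard_image A
  refine ⟨?_, ?_, fun T => ?_⟩
  · rintro (e | e)
    · simpa [RedBlueHypergraph.join, Set.encard_insert_of_notMem, encard_inl]
        using h₁.le_encard_red e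
    · simpa [RedBlueHypergraph.join, encard_inr] using h₂.le_encard_red e
  · rintro (e | e)
    · simpa [RedBlueHypergraph.join, encard_inl] using h₁.le_encard_blue e
    · simpa [RedBlueHypergraph.join, Set.encard_insert_of_notMem, encard_inr]
        using h₂.le_encard_blue e
  · by_cases hT : none ∈ T
    · rcases h₁.exists_monochromatic {v | some (Sum.inl v) ∈ T} with ⟨e, he⟩ | ⟨e, he⟩
      · exact .inl ⟨.inl e, Set.insert_subset hT (Set.image_subset_iff.2 he)⟩
      · exact .inr ⟨.inl e, Set.image_subset_iff.2 he⟩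
    · rcases h₂.exists_monochromatic {v | some (Sum.inr v) ∈ T} with ⟨e, he⟩ | ⟨e, he⟩
      · exact .inl ⟨.inr e, Set.image_subset_iff.2 he⟩
      · exact .inr ⟨.inr e, Set.insert_subset hT (Set.image_subset_iff.2 he)⟩

/-- The unsplittable hypergraph with parameters `k` and `l`. For `k = 0` a single empty red edge
suffices, and for `l = 0` a single empty blue edge. -/
def ladder : ℕ → ℕ → RedBlueHypergraph
  | 0, _ => ⟨Empty, Unit, Empty, inferInstance, inferInstance, inferInstance, fun _ => ∅, nofun⟩
  | _ + 1, 0 => ⟨Empty, Empty, Unit, inferInstance, inferInstance, inferInstance, nofun, fun _ => ∅⟩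
  | k + 1, l + 1 => (ladder k (l + 1)).join (ladder (k + 1) l)

lemma isUnsplittable_ladder (k l : ℕ) : (ladder k l).IsUnsplittable k l := by
  fun_induction ladder k l with
  | case1 => exact ⟨by simp, nofun, fun T => .inl ⟨(), Set.empty_subset T⟩⟩
  | case2 => exact ⟨nofun, by simp, fun T => .inr ⟨(), Set.empty_subset Tᶜ⟩⟩
  | case3 k l ih₁ ih₂ => exact ih₁.join ih₂

end RedBlueHypergraph

end Hypergraph

section Cones

variable {E : Type*} [AddCommGroup E] [Module ℝ E] [TopologicalSpace E]

lemma tendsto_smul_nhdsGT_zero [ContinuousSMul ℝ E] (x : E) :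
    Tendsto (fun η : ℝ => η • x) (𝓝[>] 0) (𝓝 0) := by
  have : Continuous fun η : ℝ => η • x := by fun_prop
  simpa using (this.tendsto 0).mono_left nhdsWithin_le_nhds

lemma tendsto_add_smul_nhdsGT_zero [ContinuousAdd E] [ContinuousSMul ℝ E] (u x : E) :
    Tendsto (fun η : ℝ => u + η • x) (𝓝[>] 0) (𝓝 u) := by
  simpa using tendsto_const_nhds.add (tendsto_smul_nhdsGT_zero x)

variable {K K' : ConvexCone ℝ E} {d : E}

lemma smul_mem_interior_cone_iff [ContinuousConstSMul ℝ E] {c : ℝ} (hc : 0 < c) {x : E} :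
    c • x ∈ interior (K : Set E) ↔ x ∈ interior (K : Set E) := by
  have hK : c • (K : Set E) = K := by
    ext y
    rw [Set.mem_smul_set_iff_inv_smul_mem₀ hc.ne', SetLike.mem_coe, SetLike.mem_coe,
      K.smul_mem_iff (inv_pos.2 hc)]
  have h := Set.smul_mem_smul_set_iff₀ hc.ne' (interior (K : Set E)) x
  rwa [← interior_smul₀ hc.ne', hK] at h

lemma add_mem_interior_cone [IsTopologicalAddGroup E] {x y : E} (hx : x ∈ K)
    (hy : y ∈ interior (K : Set E)) : x + y ∈ interior (K : Set E) :=
  interior_mono (Set.add_subset_iff.2 fun _ hu _ hv => K.add_mem hu hv)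
    (subset_interior_add_right (Set.add_mem_add hx hy))

lemma eventually_incidence_iff [IsTopologicalAddGroup E] [ContinuousSMul ℝ E]
    (hK : IsClosed (K : Set E)) {ι V : Type*} [Finite ι] [Finite V] {edge : ι → Set V}
    {x₀ x₁ : ι → E} {p₀ p₁ : V → E}
    (h : ∀ e v, x₀ e - p₀ v ∈ interior (K : Set E) ∧ v ∈ edge e ∨ x₀ e - p₀ v ∉ K ∧ v ∉ edge e ∨
      x₀ e = p₀ v ∧ (v ∈ edge e ↔ x₁ e - p₁ v ∈ K)) :
    ∀ᶠ η in 𝓝[>] (0 : ℝ), ∀ e v,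
      v ∈ edge e ↔ (x₀ e + η • x₁ e) - (p₀ v + η • p₁ v) ∈ K := by
  refine eventually_all.2 fun e => eventually_all.2 fun v => ?_
  have hsub (η : ℝ) : (x₀ e + η • x₁ e) - (p₀ v + η • p₁ v) =
      (x₀ e - p₀ v) + η • (x₁ e - p₁ v) := by module
  simp only [hsub]
  have hlim := tendsto_add_smul_nhdsGT_zero (x₀ e - p₀ v) (x₁ e - p₁ v)
  rcases h e v with ⟨hint, hv⟩ | ⟨hout, hv⟩ | ⟨heq, hv⟩
  · filter_upwards [hlim.eventually_mem (mem_interior_iff_mem_nhds.1 hint)] with η hη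
    exact iff_of_true hv hη
  · filter_upwards [hlim.eventually_mem (hK.isOpen_compl.mem_nhds hout)] with η hη
    exact iff_of_false hv hη
  · filter_upwards [self_mem_nhdsWithin] with η hη
    rw [hv, sub_eq_zero.2 heq, zero_add, K.smul_mem_iff hη]

lemma exists_forall_ge_add_smul_mem_cone [ContinuousAdd E] [ContinuousSMul ℝ E]
    (hd : d ∈ interior (K : Set E)) (w : E) : ∃ z₀ : ℝ, ∀ z ≥ z₀, w + z • d ∈ K := by
  obtain ⟨η, hmem, hη : 0 < η⟩ := (((tendsto_add_smul_nhdsGT_zero d w).eventually_mem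
    (mem_interior_iff_mem_nhds.1 hd)).and self_mem_nhdsWithin).exists
  refine ⟨η⁻¹, fun z hz => ?_⟩
  have h₀ : w + η⁻¹ • d ∈ K := by
    rw [← K.smul_mem_iff hη]
    simpa [smul_smul, hη.ne', add_comm] using hmem
  rcases hz.eq_or_lt with rfl | hz
  · exact h₀
  · have := K.add_mem h₀ (K.smul_mem (sub_pos.2 hz) (interior_subset hd))
    convert this using 1
    module

/-- In the two-dimensional picture `K ∩ (n + ℝ d)` and `-K ∩ (n + ℝ d)` are disjoint closed rays
pointing in opposite directions, and `z` and `r` are chosen near the end of the latter, `z` outside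
it and `r` inside it. -/
lemma exists_separating_parameters [IsTopologicalAddGroup E] [ContinuousSMul ℝ E]
    (hK : IsClosed (K : Set E)) (hsal : K.Salient)
    (hd : d ∈ interior (K : Set E)) {n : E} (hn : n ∉ Submodule.span ℝ {d}) :
    ∃ z r : ℝ, -(n + r • d) ∈ interior (K : Set E) ∧ n + (2 * z - r) • d ∉ K ∧
      n + z • d ∉ K ∧ -(n + z • d) ∉ K := by
  have hne (z : ℝ) : n + z • d ≠ 0 := fun h =>
    hn (Submodule.mem_span_singleton.2 ⟨-z, by rw [neg_smul, eq_neg_of_add_eq_zero_left h]⟩)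
  obtain ⟨z₁, hz₁, hmax⟩ : ∃ z₁, IsGreatest {z : ℝ | -(n + z • d) ∈ K} z₁ := by
    refine ⟨_, IsClosed.isGreatest_csSup (hK.preimage (by fun_prop)) ?_ ?_⟩
    · obtain ⟨z₀, h⟩ := exists_forall_ge_add_smul_mem_cone hd (-n)
      refine ⟨-z₀, ?_⟩
      simpa [add_comm] using h z₀ le_rfl
    · obtain ⟨z₀, h⟩ := exists_forall_ge_add_smul_mem_cone hd n
      refine ⟨z₀, fun z hz => ?_⟩
      by_contra! hlt
      exact hsal _ (h z hlt.le) (hne z) hz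
  have hz₁' : n + z₁ • d ∉ K := fun h => hsal _ h (hne z₁) hz₁
  have hev (c : ℝ) : ∀ᶠ η in 𝓝[>] (0 : ℝ), n + (z₁ + c * η) • d ∉ K := by
    filter_upwards [(tendsto_add_smul_nhdsGT_zero (n + z₁ • d) (c • d)).eventually_mem
      (hK.isOpen_compl.mem_nhds hz₁')] with η hη h
    have : (n + z₁ • d) + η • c • d = n + (z₁ + c * η) • d := by module
    exact hη (this ▸ h)
  obtain ⟨η, h₁, h₃, hη : 0 < η⟩ := ((hev 1).and ((hev 3).and self_mem_nhdsWithin)).exists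
  refine ⟨z₁ + η, z₁ - η, ?_, ?_, by simpa using h₁, fun h => ?_⟩
  · convert add_mem_interior_cone hz₁ ((smul_mem_interior_cone_iff hη).2 hd) using 1
    module
  · convert h₃ using 4
    ring
  · linarith [hmax h]

namespace RedBlueHypergraph

/-- The vertices of `H` can be placed as pairs of points `p v` and `p v + s v • d`, and the edges
as points `x e` and `y e`, in such a way that a red edge `e` contains `v` iff `x e` lies in the
translate of `K` to `p v`, and a blue edge `e` contains `v` iff `y e` lies in the translate of `K'`
to `p v + s v • d`. -/
def IsRealizable (H : RedBlueHypergraph) (K K' : ConvexCone ℝ E) (d : E) : Prop :=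
  ∃ (p : H.V → E) (s : H.V → ℝ) (x : H.R → E) (y : H.B → E),
    (∀ e v, v ∈ H.red e ↔ x e - p v ∈ K) ∧ ∀ e v, v ∈ H.blue e ↔ y e - (p v + s v • d) ∈ K'

section Join

variable [IsTopologicalAddGroup E] [ContinuousSMul ℝ E] {H₁ H₂ : RedBlueHypergraph}
  {p₁ : H₁.V → E} {p₂ : H₂.V → E} {a o : E}

lemma eventually_mem_red_join_iff {x₁ : H₁.R → E} {x₂ : H₂.R → E} (hK : IsClosed (K : Set E))
    (ha : -a ∈ interior (K : Set E)) (hao : o - a ∉ K) (ho : o ∉ K) (ho' : -o ∉ K)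
    (h₁ : ∀ e v, v ∈ H₁.red e ↔ x₁ e - p₁ v ∈ K) (h₂ : ∀ e v, v ∈ H₂.red e ↔ x₂ e - p₂ v ∈ K) :
    ∀ᶠ η in 𝓝[>] (0 : ℝ), ∀ (e : H₁.R ⊕ H₂.R) (v : Option (H₁.V ⊕ H₂.V)),
      v ∈ (H₁.join H₂).red e ↔ (Sum.elim (fun _ => 0) (fun _ => o) e + η • Sum.elim x₁ x₂ e) -
        (v.elim a (Sum.elim (fun _ => 0) fun _ => o) + η • v.elim 0 (Sum.elim p₁ p₂)) ∈ K := by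
  refine eventually_incidence_iff hK (V := Option (H₁.V ⊕ H₂.V)) ?_
  rintro (e | e) (_ | v | v)
  · exact .inl ⟨by simpa using ha, by simp [join]⟩
  · exact .inr (.inr ⟨rfl, by simpa [join] using h₁ e v⟩)
  · exact .inr (.inl ⟨by simpa using ho', by simp [join]⟩)
  · exact .inr (.inl ⟨by simpa using hao, by simp [join]⟩)
  · exact .inr (.inl ⟨by simpa using ho, by simp [join]⟩)
  · exact .inr (.inr ⟨rfl, by simpa [join] using h₂ e v⟩)

lemma eventually_mem_blue_join_iff {y₁ : H₁.B → E} {y₂ : H₂.B → E} (hK : IsClosed (K : Set E))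
    (ha : -a ∉ K) (hao : o - a ∈ interior (K : Set E)) (ho : o ∉ K) (ho' : -o ∉ K)
    (h₁ : ∀ e v, v ∈ H₁.blue e ↔ y₁ e - p₁ v ∈ K) (h₂ : ∀ e v, v ∈ H₂.blue e ↔ y₂ e - p₂ v ∈ K) :
    ∀ᶠ η in 𝓝[>] (0 : ℝ), ∀ (e : H₁.B ⊕ H₂.B) (v : Option (H₁.V ⊕ H₂.V)),
      v ∈ (H₁.join H₂).blue e ↔ (Sum.elim (fun _ => 0) (fun _ => o) e + η • Sum.elim y₁ y₂ e) -
        (v.elim a (Sum.elim (fun _ => 0) fun _ => o) + η • v.elim 0 (Sum.elim p₁ p₂)) ∈ K := by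
  refine eventually_incidence_iff hK (V := Option (H₁.V ⊕ H₂.V)) ?_
  rintro (e | e) (_ | v | v)
  · exact .inr (.inl ⟨by simpa using ha, by simp [join]⟩)
  · exact .inr (.inr ⟨rfl, by simpa [join] using h₁ e v⟩)
  · exact .inr (.inl ⟨by simpa using ho', by simp [join]⟩)
  · exact .inl ⟨by simpa using hao, by simp [join]⟩
  · exact .inr (.inl ⟨by simpa using ho, by simp [join]⟩)
  · exact .inr (.inr ⟨rfl, by simpa [join] using h₂ e v⟩)

/-- The placements of `H₁` and `H₂` are shrunk by a small factor `η` and put near `0` and near a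
point on the line `2 • n + ℝ d`, far enough apart not to interact, while the new vertex is put on
the line `n + ℝ d` halfway in between. -/
lemma IsRealizable.join (hK : IsClosed (K : Set E)) (hK' : IsClosed (K' : Set E))
    (hsal : K.Salient) (hsal' : K'.Salient) (hd : d ∈ interior (K : Set E))
    (hd' : -d ∈ interior (K' : Set E)) {n : E} (hn : n ∉ Submodule.span ℝ {d})
    (h₁ : H₁.IsRealizable K K' d) (h₂ : H₂.IsRealizable K K' d) :
    (H₁.join H₂).IsRealizable K K' d := by
  obtain ⟨p₁, s₁, x₁, y₁, hx₁, hy₁⟩ := h₁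
  obtain ⟨p₂, s₂, x₂, y₂, hx₂, hy₂⟩ := h₂
  have hn' : -n ∉ Submodule.span ℝ {-d} := by
    rwa [← Set.neg_singleton, Submodule.span_neg, Submodule.neg_mem_iff]
  obtain ⟨z, r, hr, hzr, hz, hz'⟩ := exists_separating_parameters hK hsal hd hn
  obtain ⟨z', r', hr', hzr', hw, hw'⟩ := exists_separating_parameters hK' hsal' hd' hn'
  have hred := eventually_mem_red_join_iff (a := n + r • d) (o := (2 : ℝ) • (n + z • d)) hK hr
    (by convert hzr using 2; module) (by rwa [K.smul_mem_iff two_pos])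
    (by rwa [← smul_neg, K.smul_mem_iff two_pos]) hx₁ hx₂
  have hblue := eventually_mem_blue_join_iff (a := n + (2 * z' - r') • d)
    (o := (2 : ℝ) • (n + z' • d)) hK' (by convert hzr' using 2; module)
    (by convert hr' using 2; module)
    (by rw [K'.smul_mem_iff two_pos]; convert hw' using 2; module)
    (by rw [← smul_neg, K'.smul_mem_iff two_pos]; convert hw using 2; module) hy₁ hy₂
  obtain ⟨η, hη, hη'⟩ := (hred.and hblue).exists
  let s (v : Option (H₁.V ⊕ H₂.V)) : ℝ := v.elim (2 * z' - r' - r)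
    (Sum.elim (fun _ => 0) fun _ => 2 * (z' - z)) + η * v.elim 0 (Sum.elim s₁ s₂)
  let y (e : H₁.B ⊕ H₂.B) : E :=
    Sum.elim (fun _ => 0) (fun _ => (2 : ℝ) • (n + z' • d)) e + η • Sum.elim y₁ y₂ e
  refine ⟨_, s, _, y, hη, fun e v => (hη' e v).trans ?_⟩
  congr! 2
  rcases v with _ | v | v <;> simp only [s, Option.elim, Sum.elim_inl, Sum.elim_inr] <;> module

end Join

lemma isRealizable_ladder [IsTopologicalAddGroup E] [ContinuousSMul ℝ E]
    (hK : IsClosed (K : Set E)) (hK' : IsClosed (K' : Set E)) (hsal : K.Salient)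
    (hsal' : K'.Salient) (hd : d ∈ interior (K : Set E)) (hd' : -d ∈ interior (K' : Set E)) {n : E}
    (hn : n ∉ Submodule.span ℝ {d}) (k l : ℕ) : (ladder k l).IsRealizable K K' d := by
  fun_induction ladder k l with
  | case1 => exact ⟨nofun, nofun, 0, nofun, nofun, nofun⟩
  | case2 => exact ⟨nofun, nofun, nofun, 0, nofun, nofun⟩
  | case3 k l ih₁ ih₂ => exact ih₁.join hK hK' hsal hsal' hd hd' hn ih₂

end RedBlueHypergraph

end Cones

section ConicPoints

variable {E : Type*} [AddCommGroup E] [Module ℝ E] [TopologicalSpace E]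

/-- Near the point `A`, the set `S` coincides with the translate to `A` of the cone `K`. -/
def IsConicAt (S : Set E) (A : E) (K : ConvexCone ℝ E) : Prop :=
  ∀ᶠ w in 𝓝 (0 : E), A + w ∈ S ↔ w ∈ K

namespace IsConicAt

variable [ContinuousSMul ℝ E] {S : Set E} {A : E} {K : ConvexCone ℝ E}

lemma eventually_add_smul_mem_iff (h : IsConicAt S A K) (w : E) :
    ∀ᶠ η in 𝓝[>] (0 : ℝ), A + η • w ∈ S ↔ w ∈ K := by
  filter_upwards [(tendsto_smul_nhdsGT_zero w).eventually h, self_mem_nhdsWithin] with η hη hpos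
  rw [hη, K.smul_mem_iff hpos]

lemma salient (h : IsConicAt S A K) (hA : A ∈ S.extremePoints ℝ) : K.Salient := by
  intro w hw hw₀ hw'
  obtain ⟨η, hη, hη', hpos : 0 < η⟩ := ((h.eventually_add_smul_mem_iff w).and
    ((h.eventually_add_smul_mem_iff (-w)).and self_mem_nhdsWithin)).exists
  have hmid : A ∈ openSegment ℝ (A + η • w) (A + η • -w) :=
    ⟨1 / 2, 1 / 2, by norm_num, by norm_num, by norm_num, by module⟩
  have heq := hA.2 (hη.2 hw) (hη'.2 hw') hmid
  exact (smul_ne_zero hpos.ne' hw₀) (by simpa using heq)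

variable [IsTopologicalAddGroup E]

lemma isClosed (h : IsConicAt S A K) (hS : IsClosed S) : IsClosed (K : Set E) := by
  refine isClosed_of_closure_subset fun w hw => ?_
  obtain ⟨η, hη, hmem, hpos : 0 < η⟩ := (((tendsto_smul_nhdsGT_zero w).eventually
    h.eventually_nhds).and ((h.eventually_add_smul_mem_iff w).and self_mem_nhdsWithin)).exists
  refine hmem.1 (hS.closure_subset ?_)
  have hcl : η • w ∈ closure (K : Set E) := K.closure.smul_mem hpos hw
  have hfreq : ∃ᶠ v in 𝓝 (η • w), A + v ∈ S :=
    (mem_closure_iff_frequently.1 hcl).mp (hη.mono fun v hv hvK => hv.2 hvK)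
  exact mem_closure_iff_frequently.2
    ((continuous_const_add A).continuousAt.tendsto.frequently hfreq)

lemma sub_mem_interior (h : IsConicAt S A K) (hS : Convex ℝ S) (hA : A ∈ S) {M : E}
    (hM : M ∈ interior S) : M - A ∈ interior (K : Set E) := by
  have hlim : Tendsto (fun p : ℝ × E => p.1 • p.2) (𝓝[>] 0 ×ˢ 𝓝 (M - A)) (𝓝 0) := by
    have : Continuous fun p : ℝ × E => p.1 • p.2 := by fun_prop
    simpa [nhds_prod_eq] using (this.tendsto (0, M - A)).mono_left
      (nhds_prod_eq.trans_ge (Filter.prod_mono nhdsWithin_le_nhds le_rfl))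
  have hev : ∀ᶠ w in 𝓝 (M - A), A + w ∈ S := by
    have : Tendsto (fun w => A + w) (𝓝 (M - A)) (𝓝 M) := by
      simpa using (continuous_const_add A).tendsto (M - A)
    exact this.eventually_mem (mem_interior_iff_mem_nhds.1 hM)
  obtain ⟨η, hη, hpos, hlt⟩ := ((hlim.eventually h).curry.and
    (Ioo_mem_nhdsGT one_pos)).exists
  refine mem_interior_iff_mem_nhds.2 ?_
  filter_upwards [hη, hev] with w hw hwS
  rw [SetLike.mem_coe, ← K.smul_mem_iff hpos, ← hw]
  exact hS.add_smul_mem hA hwS ⟨hpos.le, hlt.le⟩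

end IsConicAt

end ConicPoints

section Homothets

variable {E : Type u} [NormedAddCommGroup E] [NormedSpace ℝ E] {S : Set E}

lemma mem_vadd_smul_set_iff {ε : ℝ} (hε : ε ≠ 0) {p x : E} :
    x ∈ p +ᵥ ε • S ↔ ε⁻¹ • (x - p) ∈ S := by
  rw [Set.mem_vadd_set_iff_neg_vadd_mem, Set.mem_smul_set_iff_inv_smul_mem₀ hε, vadd_eq_add,
    neg_add_eq_sub]

lemma IsConicAt.eventually_mem_vadd_smul_set_iff {A : E} {K : ConvexCone ℝ E}
    (h : IsConicAt S A K) (s : ℝ) (q x : E) :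
    ∀ᶠ η in 𝓝[>] (0 : ℝ), A + η • x ∈ (A + η • q - (1 + η * s) • A) +ᵥ (1 + η * s) • S ↔
      x - q ∈ K := by
  have hscale : Tendsto (fun η : ℝ => 1 + η * s) (𝓝[>] 0) (𝓝 1) :=
    tendsto_add_smul_nhdsGT_zero 1 s
  have hlim : Tendsto (fun η : ℝ => (1 + η * s)⁻¹ • η • (x - q)) (𝓝[>] 0) (𝓝 0) := by
    simpa using (hscale.inv₀ one_ne_zero).smul (tendsto_smul_nhdsGT_zero (x - q))
  filter_upwards [hlim.eventually h, hscale.eventually_const_lt one_pos,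
    self_mem_nhdsWithin] with η hη hs hpos
  have hpull : (1 + η * s)⁻¹ • (A + η • x - (A + η • q - (1 + η * s) • A)) =
      A + (1 + η * s)⁻¹ • η • (x - q) := by
    rw [show A + η • x - (A + η • q - (1 + η * s) • A) = (1 + η * s) • A + η • (x - q) by module,
      smul_add, inv_smul_smul₀ hs.ne']
  rw [mem_vadd_smul_set_iff hs.ne', hpull, hη, K.smul_mem_iff (inv_pos.2 hs), K.smul_mem_iff hpos]

/-- The indices of the homothets `p i +ᵥ ε i • S` that contain the point `x`. -/
def copiesThrough {I : Type*} (ε : I → ℝ) (p : I → E) (S : Set E) (x : E) : Set I :=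
  {i | x ∈ p i +ᵥ ε i • S}

/-- Some family of positive homothets of `S` covers every point at least `m` times and is not the
union of two coverings: whenever the family is split into `T` and `Tᶜ`, some point is covered by
only one of the two parts. -/
def HasIndecomposableCover (m : ℕ) (S : Set E) : Prop :=
  ∃ (I : Type u) (ε : I → ℝ) (p : I → E), (∀ i, 0 < ε i) ∧
    (∀ x, (m : ℕ∞) ≤ (copiesThrough ε p S x).encard) ∧
    ∀ T : Set I, ∃ x, copiesThrough ε p S x ⊆ T ∨ copiesThrough ε p S x ⊆ Tᶜ

lemma exists_vadd_smul_set_disjoint (hS : Bornology.IsBounded S) (hne : S.Nonempty) {F : Set E}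
    (hF : IsClosed F) {z : E} (hz : z ∉ F) :
    ∃ (ε : ℝ) (p : E), 0 < ε ∧ z ∈ p +ᵥ ε • S ∧ Disjoint (p +ᵥ ε • S) F := by
  obtain ⟨a, ha⟩ := hne
  obtain ⟨C, hC⟩ := hS.subset_closedBall a
  obtain ⟨r, hr, hball⟩ := Metric.isOpen_iff.1 hF.isOpen_compl z hz
  have hlim : Tendsto (fun ε : ℝ => ε * C) (𝓝[>] 0) (𝓝 0) := tendsto_smul_nhdsGT_zero C
  obtain ⟨ε, hεr, hε : 0 < ε⟩ :=
    ((hlim.eventually_lt_const hr).and self_mem_nhdsWithin).exists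
  refine ⟨ε, z - ε • a, hε, ⟨ε • a, ⟨a, ha, rfl⟩, sub_add_cancel z (ε • a)⟩, ?_⟩
  rw [← Set.subset_compl_iff_disjoint_right]
  rintro _ ⟨_, ⟨x, hx, rfl⟩, rfl⟩
  apply hball
  calc dist ((z - ε • a) + ε • x) z = ε * dist x a := by
        rw [dist_eq_norm, dist_eq_norm, show (z - ε • a) + ε • x - z = ε • (x - a) by module,
          norm_smul, Real.norm_of_nonneg hε.le]
    _ ≤ ε * C := by gcongr; exact hC hx
    _ < r := hεr

lemma hasIndecomposableCover_of_core {m : ℕ} (hS : Bornology.IsBounded S) (hne : S.Nonempty)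
    {F : Set E} (hF : IsClosed F) {V : Type} {ε : V → ℝ} {p : V → E} (hε : ∀ v, 0 < ε v)
    (hcover : ∀ x ∈ F, (m : ℕ∞) ≤ (copiesThrough ε p S x).encard)
    (hsplit : ∀ T : Set V, ∃ x ∈ F, copiesThrough ε p S x ⊆ T ∨ copiesThrough ε p S x ⊆ Tᶜ) :
    HasIndecomposableCover m S := by
  choose! ε' p' hε' hmem hdisj using fun z (hz : z ∉ F) =>
    exists_vadd_smul_set_disjoint hS hne hF hz
  let ε₁ : V ⊕ ↥Fᶜ × Fin m → ℝ := Sum.elim ε fun j => ε' j.1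
  let p₁ : V ⊕ ↥Fᶜ × Fin m → E := Sum.elim p fun j => p' j.1
  have hcore {x : E} (hx : x ∈ F) :
      copiesThrough ε₁ p₁ S x = Sum.inl '' copiesThrough ε p S x := by
    ext (v | j)
    · simp [copiesThrough, ε₁, p₁]
    · have := (hdisj j.1 j.1.2).notMem_of_mem_right hx
      simpa [copiesThrough, ε₁, p₁] using this
  refine ⟨V ⊕ ↥Fᶜ × Fin m, ε₁, p₁, ?_, fun x => ?_, fun T => ?_⟩
  · rintro (v | j)
    exacts [hε v, hε' j.1 j.1.2]
  · by_cases hx : x ∈ F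
    · rw [hcore hx, Sum.inl_injective.encard_image]
      exact hcover x hx
    · have hinj : Function.Injective fun k : Fin m => (Sum.inr (⟨x, hx⟩, k) : V ⊕ ↥Fᶜ × Fin m) :=
        Sum.inr_injective.comp (Prod.mk_right_injective _)
      calc (m : ℕ∞) = ENat.card (Fin m) := by simp
        _ ≤ (Set.range _).encard := hinj.encard_range
        _ ≤ _ := Set.encard_le_encard (Set.range_subset_iff.2 fun _ => hmem x hx)
  · obtain ⟨x, hx, h⟩ := hsplit (Sum.inl ⁻¹' T)
    refine ⟨x, ?_⟩
    rw [hcore hx, Set.image_subset_iff, Set.image_subset_iff]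
    exact h

lemma hasIndecomposableCover_of_isUnsplittable {H : RedBlueHypergraph} {m : ℕ}
    (hH : H.IsUnsplittable m m) (hS : Bornology.IsBounded S) (hne : S.Nonempty) {ε : H.V → ℝ}
    {p : H.V → E} (hε : ∀ v, 0 < ε v) {x : H.R → E} {y : H.B → E}
    (hx : ∀ e, copiesThrough ε p S (x e) = H.red e)
    (hy : ∀ e, copiesThrough ε p S (y e) = H.blue e) : HasIndecomposableCover m S := by
  refine hasIndecomposableCover_of_core (p := p) hS hne
    ((Set.finite_range x).union (Set.finite_range y)).isClosed hε ?_ fun T => ?_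
  · rintro _ (⟨e, rfl⟩ | ⟨e, rfl⟩)
    · exact hx e ▸ hH.le_encard_red e
    · exact hy e ▸ hH.le_encard_blue e
  · rcases hH.exists_monochromatic T with ⟨e, he⟩ | ⟨e, he⟩
    · exact ⟨x e, .inl ⟨e, rfl⟩, .inl (hx e ▸ he)⟩
    · exact ⟨y e, .inr ⟨e, rfl⟩, .inr (hy e ▸ he)⟩

/-- If the vertex `v` is realized with shift `s v`, the copy of `S` scaled by `1 + η * s v` whose
corner over `A` is moved by `η • p v` has its corner over `A + d` moved by `η • (p v + s v • d)`. -/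
lemma RedBlueHypergraph.IsRealizable.exists_homothets {H : RedBlueHypergraph}
    {K K' : ConvexCone ℝ E} {A d : E} (hH : H.IsRealizable K K' d) (hA : IsConicAt S A K)
    (hB : IsConicAt S (A + d) K') :
    ∃ (ε : H.V → ℝ) (p : H.V → E) (x : H.R → E) (y : H.B → E), (∀ v, 0 < ε v) ∧
      (∀ e, copiesThrough ε p S (x e) = H.red e) ∧
      ∀ e, copiesThrough ε p S (y e) = H.blue e := by
  obtain ⟨p, s, x, y, hx, hy⟩ := hH
  have hred : ∀ᶠ η in 𝓝[>] (0 : ℝ), ∀ e v, A + η • x e ∈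
      (A + η • p v - (1 + η * s v) • A) +ᵥ (1 + η * s v) • S ↔ v ∈ H.red e :=
    eventually_all.2 fun e => eventually_all.2 fun v => by
      simpa only [hx] using hA.eventually_mem_vadd_smul_set_iff (s v) (p v) (x e)
  have hblue : ∀ᶠ η in 𝓝[>] (0 : ℝ), ∀ e v, A + d + η • y e ∈
      (A + η • p v - (1 + η * s v) • A) +ᵥ (1 + η * s v) • S ↔ v ∈ H.blue e := by
    refine eventually_all.2 fun e => eventually_all.2 fun v => ?_
    have htranslate (η : ℝ) : A + η • p v - (1 + η * s v) • A =
        A + d + η • (p v + s v • d) - (1 + η * s v) • (A + d) := by module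
    simpa only [hy, htranslate] using
      hB.eventually_mem_vadd_smul_set_iff (s v) (p v + s v • d) (y e)
  have hpos : ∀ᶠ η in 𝓝[>] (0 : ℝ), ∀ v, 0 < 1 + η * s v := eventually_all.2 fun v =>
    (tendsto_add_smul_nhdsGT_zero 1 (s v)).eventually_const_lt one_pos
  obtain ⟨η, hredη, hblueη, hposη⟩ := (hred.and (hblue.and hpos)).exists
  exact ⟨fun v => 1 + η * s v, fun v => A + η • p v - (1 + η * s v) • A, fun e => A + η • x e,
    fun e => A + d + η • y e, hposη, fun e => Set.ext (hredη e), fun e => Set.ext (hblueη e)⟩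

lemma hasIndecomposableCover_of_isConicAt (hE : 1 < Module.rank ℝ E) (hS : IsCompact S)
    (hconv : Convex ℝ S) {A B : E} (hA : A ∈ S.extremePoints ℝ) (hB : B ∈ S.extremePoints ℝ)
    (hAB : midpoint ℝ A B ∈ interior S) {K K' : ConvexCone ℝ E} (hK : IsConicAt S A K)
    (hK' : IsConicAt S B K') (m : ℕ) : HasIndecomposableCover m S := by
  obtain ⟨n, hn⟩ : ∃ n, n ∉ Submodule.span ℝ {B - A} := by
    by_contra! h
    have : Module.rank ℝ E ≤ 1 := by
      rw [← rank_top, ← (Submodule.eq_top_iff'.2 h : Submodule.span ℝ {B - A} = ⊤)]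
      exact (rank_span_le _).trans_eq (by simp)
    exact this.not_gt hE
  have hd : B - A ∈ interior (K : Set E) := by
    rw [← smul_mem_interior_cone_iff (invOf_pos.2 two_pos), ← midpoint_sub_left]
    exact hK.sub_mem_interior hconv hA.1 hAB
  have hd' : -(B - A) ∈ interior (K' : Set E) := by
    rw [neg_sub, ← smul_mem_interior_cone_iff (invOf_pos.2 two_pos), ← midpoint_sub_right]
    exact hK'.sub_mem_interior hconv hB.1 hAB
  have hB' : A + (B - A) = B := add_sub_cancel A B
  have hreal := RedBlueHypergraph.isRealizable_ladder (hK.isClosed hS.isClosed)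
    (hK'.isClosed hS.isClosed) (hK.salient hA) (hK'.salient hB) hd hd' hn m m
  obtain ⟨ε, p, x, y, hε, hx, hy⟩ := hreal.exists_homothets hK (hB'.symm ▸ hK')
  exact hasIndecomposableCover_of_isUnsplittable (RedBlueHypergraph.isUnsplittable_ladder m m)
    hS.isBounded ⟨A, hA.1⟩ hε hx hy

end Homothets

section Polytopes

variable {E : Type u} [NormedAddCommGroup E] [NormedSpace ℝ E]

lemma eq_or_exists_mem_segment_of_mem_convexHull {E : Type*} [AddCommGroup E]
    [Module ℝ E] {P : Set E} {y : E} (A : E) (hy : y ∈ convexHull ℝ P) :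
    y = A ∨ ∃ q ∈ convexHull ℝ (P \ {A}), y ∈ segment ℝ A q := by
  have hy' : y ∈ convexHull ℝ (insert A (P \ {A})) :=
    convexHull_mono (by simp) hy
  rcases (P \ {A}).eq_empty_or_nonempty with hP | hP
  · left
    simpa [hP] using hy'
  · right
    rw [convexHull_insert hP, mem_convexJoin] at hy'
    simpa using hy'

lemma isConicAt_convexHull {P : Set E} (hP : P.Finite) {A : E}
    (hA : A ∈ (convexHull ℝ P).extremePoints ℝ) :
    IsConicAt (convexHull ℝ P) A (ConvexCone.hull ℝ (-A +ᵥ convexHull ℝ P)) := by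
  have hS := convex_convexHull ℝ P
  have hAQ : A ∉ convexHull ℝ (P \ {A}) := fun h =>
    ((hS.mem_extremePoints_iff_mem_sdiff_convexHull_sdiff).1 hA).2
      (convexHull_mono (Set.sdiff_subset_sdiff_left (subset_convexHull ℝ P)) h)
  obtain ⟨δ, hδ, hball⟩ := Metric.isOpen_iff.1
    (hP.sdiff.isClosed_convexHull ℝ).isOpen_compl A hAQ
  filter_upwards [Metric.ball_mem_nhds 0 hδ] with w hw
  rw [ConvexCone.mem_hull_of_convex (hS.vadd (-A))]
  constructor
  · intro hAw
    exact ⟨1, one_pos, by simpa [Set.mem_vadd_set_iff_neg_vadd_mem] using hAw⟩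
  rintro ⟨c, hc, _, ⟨y, hy, rfl⟩, rfl⟩
  rcases eq_or_exists_mem_segment_of_mem_convexHull A hy with rfl | ⟨q, hq, hyq⟩
  · simpa using hA.1
  rw [segment_eq_image'] at hyq
  obtain ⟨t, ⟨ht₀, -⟩, rfl⟩ := hyq
  have hw_eq : c • (-A +ᵥ (A + t • (q - A))) = (c * t) • (q - A) := by
    rw [vadd_eq_add]; module
  have hδq : δ ≤ ‖q - A‖ := by
    by_contra! h
    exact hball (mem_ball_iff_norm.2 h) hq
  have hct : c * t < 1 := by
    simp only [hw_eq] at hw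
    rw [mem_ball_zero_iff, norm_smul, Real.norm_of_nonneg (by positivity)] at hw
    by_contra! h
    nlinarith [norm_nonneg (q - A)]
  simp only [hw_eq]
  exact hS.add_smul_sub_mem hA.1 (convexHull_mono Set.sdiff_subset hq) ⟨by positivity, hct.le⟩

end Polytopes

section InteriorDiagonals

lemma not_collinear_of_mem_extremePoints {𝕜 E : Type*} [Field 𝕜] [LinearOrder 𝕜]
    [IsStrictOrderedRing 𝕜] [AddCommGroup E] [Module 𝕜 E] {S : Set E} {x y z : E}
    (hx : x ∈ S.extremePoints 𝕜) (hy : y ∈ S.extremePoints 𝕜) (hz : z ∈ S.extremePoints 𝕜)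
    (hxy : x ≠ y) (hxz : x ≠ z) (hyz : y ≠ z) : ¬ Collinear 𝕜 {x, y, z} := by
  have hends {p q r : E} (hp : p ∈ S.extremePoints 𝕜) (hq : q ∈ S.extremePoints 𝕜)
      (hr : r ∈ S.extremePoints 𝕜) (h : Wbtw 𝕜 p q r) : p = q ∨ r = q :=
    (mem_extremePoints_iff_forall_segment.1 hq).2 p hp.1 r hr.1 (mem_segment_iff_wbtw.2 h)
  intro h
  rcases h.wbtw_or_wbtw_or_wbtw with h | h | h
  · exact (hends hx hy hz h).elim hxy (hyz ∘ Eq.symm)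
  · exact (hends hy hz hx h).elim hyz hxz
  · exact (hends hz hx hy h).elim (hxz ∘ Eq.symm) (hxy ∘ Eq.symm)

lemma eq_zero_of_not_collinear {𝕜 E F : Type*} [Field 𝕜] [AddCommGroup E] [Module 𝕜 E]
    [AddCommGroup F] [Module 𝕜 F] (hE : Module.finrank 𝕜 E = 2) {x y z : E}
    (h : ¬ Collinear 𝕜 {x, y, z}) {f : E →ₗ[𝕜] F} (hy : f y = f x) (hz : f z = f x) :
    f = 0 := by
  have : FiniteDimensional 𝕜 E := .of_finrank_eq_succ hE
  have htop := (affineIndependent_iff_not_collinear_set.2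
    h).vectorSpan_eq_top_of_card_eq_finrank_add_one (by simp [hE])
  rw [← LinearMap.ker_eq_top, eq_top_iff, ← htop, vectorSpan_def, Submodule.span_le]
  rintro _ ⟨_, ⟨i, rfl⟩, _, ⟨j, rfl⟩, rfl⟩
  fin_cases i <;> fin_cases j <;> simp [hy, hz]

/-- Applied to a relation `∑ j, g j • u j = 0`, the functionals show that any two of the three
coefficients are negative multiples of each other. -/
lemma linearIndependent_of_apply_eq_zero_of_apply_neg {𝕜 E : Type*} [Field 𝕜] [LinearOrder 𝕜]
    [IsStrictOrderedRing 𝕜] [AddCommGroup E] [Module 𝕜 E] {u : Fin 3 → E}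
    {f : Fin 3 → E →ₗ[𝕜] 𝕜} (hself : ∀ i, f i (u i) = 0) (hneg : ∀ i j, i ≠ j → f i (u j) < 0) :
    LinearIndependent 𝕜 u := by
  refine Fintype.linearIndependent_iff.2 fun g hg => ?_
  have hratio {j k : Fin 3} (hjk : j ≠ k) : ∃ c < 0, g j = c * g k := by
    obtain ⟨i, hij, hik⟩ : ∃ i, i ≠ j ∧ i ≠ k := by decide +revert
    have hrel : g j * f i (u j) + g k * f i (u k) = 0 := by
      rw [← Finset.sum_eq_add_of_mem (f := fun l => g l * f i (u l)) j k (Finset.mem_univ j)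
        (Finset.mem_univ k) hjk fun l _ hl => ?_]
      · simpa using congr_arg (f i) hg
      · obtain rfl : l = i := by lia
        rw [hself, mul_zero]
    have hj := hneg i j hij
    refine ⟨-(f i (u k) / f i (u j)), neg_lt_zero.2 (div_pos_of_neg_of_neg (hneg i k hik) hj), ?_⟩
    field_simp [hj.ne]
    linear_combination hrel
  intro j
  obtain ⟨k, l, hjk, hkl, hlj⟩ : ∃ k l, j ≠ k ∧ k ≠ l ∧ l ≠ j := by decide +revert
  obtain ⟨a, ha, hgj⟩ := hratio hjk
  obtain ⟨b, hb, hgk⟩ := hratio hkl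
  obtain ⟨c, hc, hgl⟩ := hratio hlj
  have habc : a * (b * c) < 0 := mul_neg_of_neg_of_pos ha (mul_pos_of_neg_of_neg hb hc)
  have hcycle : (1 - a * (b * c)) * g j = 0 := by
    linear_combination hgj + a * hgk + a * b * hgl
  exact (mul_eq_zero.1 hcycle).resolve_left (by linarith)

section Normed

variable {E : Type*} [NormedAddCommGroup E] [NormedSpace ℝ E] {S : Set E}

lemma exists_dual_eq_of_midpoint_notMem_interior (hS : Convex ℝ S) (hint : (interior S).Nonempty)
    {x y : E} (hx : x ∈ S) (hy : y ∈ S) (h : midpoint ℝ x y ∉ interior S) :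
    ∃ f : StrongDual ℝ E, f ≠ 0 ∧ f y = f x ∧ ∀ z ∈ S, f z ≤ f x := by
  obtain ⟨f, hf, hle⟩ := geometric_hahn_banach_of_nonempty_interior_point hS h hint
  have hmid : f (midpoint ℝ x y) = (f x + f y) / 2 := by
    rw [midpoint_eq_smul_add, map_smul, map_add, invOf_eq_inv, smul_eq_mul, inv_mul_eq_div]
  have hxy : f y = f x := by linarith [hle x hx, hle y hy]
  exact ⟨f, hf, hxy, fun z hz => (hle z hz).trans_eq (by rw [hmid, hxy, add_self_div_two])⟩

lemma interior_nonempty_of_not_collinear (hE : Module.finrank ℝ E = 2) (hS : Convex ℝ S)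
    {x y z : E} (hx : x ∈ S) (hy : y ∈ S) (hz : z ∈ S) (h : ¬ Collinear ℝ {x, y, z}) :
    (interior S).Nonempty := by
  have : FiniteDimensional ℝ E := .of_finrank_eq_succ hE
  have hspan := (affineIndependent_iff_not_collinear_set.2
    h).affineSpan_eq_top_iff_card_eq_finrank_add_one.2 (by simp [hE])
  rw [hS.interior_nonempty_iff_affineSpan_eq_top, eq_top_iff, ← hspan]
  refine affineSpan_mono ℝ (Set.range_subset_iff.2 fun i => ?_)
  fin_cases i <;> assumption

lemma exists_midpoint_mem_interior (hE : Module.finrank ℝ E = 2) (hS : Convex ℝ S) {A : E}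
    (hA : A ∈ S.extremePoints ℝ) {v : Fin 3 → E} (hv : ∀ i, v i ∈ S.extremePoints ℝ)
    (hinj : v.Injective) (hAv : ∀ i, A ≠ v i) : ∃ i, midpoint ℝ A (v i) ∈ interior S := by
  have hcol {i j : Fin 3} (hij : i ≠ j) : ¬ Collinear ℝ {A, v i, v j} :=
    not_collinear_of_mem_extremePoints hA (hv i) (hv j) (hAv i) (hAv j) (hinj.ne hij)
  have hint := interior_nonempty_of_not_collinear hE hS hA.1 (hv 0).1 (hv 1).1 (hcol zero_ne_one)
  by_contra! h
  choose f hf hself hle using fun i =>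
    exists_dual_eq_of_midpoint_notMem_interior hS hint hA.1 (hv i).1 (h i)
  have hlt (i j : Fin 3) (hij : i ≠ j) : f i (v j) < f i A :=
    (hle i (v j) (hv j).1).lt_of_ne fun heq => hf i <| ContinuousLinearMap.coe_injective <|
      eq_zero_of_not_collinear hE (hcol hij) (hself i) heq
  have : FiniteDimensional ℝ E := .of_finrank_eq_succ hE
  have hindep : LinearIndependent ℝ fun i => v i - A :=
    linearIndependent_of_apply_eq_zero_of_apply_neg (f := fun i => (f i : E →ₗ[ℝ] ℝ))
      (fun i => by simp [hself i]) fun i j hij => by simpa using hlt i j hij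
  have := hindep.fintype_card_le_finrank
  norm_num [hE] at this

end Normed

end InteriorDiagonals

section Plane

lemma homCopy_eq_vadd_smul (ε : ℝ) (p : Plane) (S : Set Plane) : homCopy ε p S = p +ᵥ ε • S := by
  simp only [homCopy, ← Set.image_smul, ← Set.image_vadd, Set.image_image, vadd_eq_add, add_comm]

lemma exists_diagonal_midpoint_mem_interior {P : Finset Plane} (hcard : 4 ≤ P.card)
    (hpos : StrictlyConvexPosition P) :
    ∃ A ∈ P, ∃ B ∈ P, midpoint ℝ A B ∈ interior (convexHull ℝ (P : Set Plane)) := by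
  obtain ⟨v⟩ : Nonempty (Fin 4 ↪ P) := Function.Embedding.nonempty_of_card_le (by simpa)
  obtain ⟨i, hi⟩ := exists_midpoint_mem_interior finrank_euclideanSpace_fin
    (convex_convexHull ℝ _) (hpos _ (v 0).2) (v := fun i => v i.succ) (fun i => hpos _ (v i.succ).2)
    (Subtype.val_injective.comp (v.injective.comp (Fin.succ_injective 3)))
    fun i => Subtype.val_injective.ne (v.injective.ne (Fin.succ_ne_zero i).symm)
  exact ⟨_, (v 0).2, _, (v i.succ).2, hi⟩

lemma HasIndecomposableCover.exists_mFoldCover {m : ℕ} {S : Set Plane}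
    (h : HasIndecomposableCover m S) :
    ∃ (I : Type) (ε : I → ℝ) (p : I → Plane), (∀ i, 0 < ε i) ∧
      MFoldCover m (fun i => homCopy (ε i) (p i) S) Set.univ ∧
      ¬ DecomposableIntoTwoCoverings (fun i => homCopy (ε i) (p i) S) := by
  obtain ⟨I, ε, p, hε, hcover, hsplit⟩ := h
  simp only [homCopy_eq_vadd_smul]
  refine ⟨I, ε, p, hε, fun x _ => ?_, ?_⟩
  · obtain ⟨t, ht, hcard⟩ := Set.exists_subset_encard_eq (hcover x)
    lift t to Finset I using Set.finite_of_encard_eq_coe hcard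
    rw [Set.encard_coe_eq_coe_finsetCard, Nat.cast_inj] at hcard
    exact ⟨t, hcard.ge, fun i hi => ht hi⟩
  · rintro ⟨T, hT, hT'⟩
    obtain ⟨x, hx | hx⟩ := hsplit T
    · obtain ⟨i, hi, hix⟩ := hT' x
      exact hi (hx hix)
    · obtain ⟨i, hi, hix⟩ := hT x
      exact hx hix hi

end Plane

theorem statement0_general {E : Type u} [NormedAddCommGroup E] [NormedSpace ℝ E]
    (hE : 1 < Module.rank ℝ E) {P : Set E} (hP : P.Finite) {A B : E}
    (hA : A ∈ (convexHull ℝ P).extremePoints ℝ) (hB : B ∈ (convexHull ℝ P).extremePoints ℝ)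
    (hAB : midpoint ℝ A B ∈ interior (convexHull ℝ P)) (m : ℕ) :
    HasIndecomposableCover m (convexHull ℝ P) :=
  hasIndecomposableCover_of_isConicAt hE (hP.isCompact_convexHull ℝ) (convex_convexHull ℝ P)
    hA hB hAB (isConicAt_convexHull hP hA) (isConicAt_convexHull hP hB) m

theorem statement0 (P : Finset Plane) (hcard : 4 ≤ P.card)
    (hpos : StrictlyConvexPosition P)
    (S : Set Plane) (hS : S = convexHull ℝ (P : Set Plane))
    (m : ℕ) (hm : 1 ≤ m) :
    ∃ (I : Type) (ε : I → ℝ) (p : I → Plane),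
      (∀ i, 0 < ε i) ∧
      MFoldCover m (fun i => homCopy (ε i) (p i) S) Set.univ ∧
      ¬ DecomposableIntoTwoCoverings (fun i => homCopy (ε i) (p i) S) := by
  subst hS
  obtain ⟨A, hA, B, hB, hAB⟩ := exists_diagonal_midpoint_mem_interior hcard hpos
  have hrank : 1 < Module.rank ℝ Plane := Module.lt_rank_of_lt_finrank (by simp)
  exact (statement0_general hrank P.finite_toSet (hpos A hA) (hpos B hB) hAB m).exists_mFoldCover
end
end

section
/- Let S be a convex polygon in the plane with at least four sides, let ε > 0, and let m ≥ 1 be an integer. Then there exists an indexed family of positive homothetic copies of S, each with scaling factor lying between 1 − ε and 1 + ε, that forms an m-fold covering of the plane ℝ² and that cannot be decomposed into two coverings. -/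
/-!
STATEMENT 2: Let S be a convex polygon with at least four sides, let ε > 0,
and let m ≥ 1. Then there is an indexed family of positive homothetic copies
of S, each with scaling factor between 1 − ε and 1 + ε, forming an m-fold
covering of ℝ² that cannot be decomposed into two coverings.
-/

noncomputable section

/-!
Attach a copy of `S` to every node of the binary tree and a pair of points `x true f`, `x false f`
to every branch `f`, such that the copy at a node contains `x b f` exactly when `f` passes through
the node and turns to the side `b` there. Whenever the nodes are split into two classes, the branch
that turns to `true` at the nodes of the first class and to `false` at those of the second turns
infinitely often to the same side `b`, and all copies containing `x b f` belong to the same class.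
Each `x b f` with infinitely many turns to `b` lies in infinitely many of these copies, so it
remains to cover every other point of the plane by copies of `S` that avoid all these points.

For a polygon with at least four sides, take two vertices joined by a diagonal. The points `x b f`
form Cantor sets on tiny segments through the two vertices, each on a line that meets `S` in the
vertex only, and the node copies are to cut out prescribed short intervals of both segments. This
prescribes the images of both vertices, which a homothety can match only if their difference stays
parallel to the diagonal. As `S` lies on both sides of the diagonal, the two corners can be
normalised so that moving in opposite senses along the two segments has this property.

A copy of `S` that avoids the Cantor sets and contains a given further point is found by separation,
except near the diagonal. There one uses a slightly smaller copy with one of the vertices at the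
given point, or the fact that `S` has chords parallel to the diagonal but shorter than it.
-/

section BinaryTree

universe u

variable {X : Type*} {C : List Bool → Set X} {x : Bool → (ℕ → Bool) → X}

theorem exists_branch {α : Type*} (s : List α → α) :
    ∃ f : ℕ → α, ∀ n, f n = s (PiNat.res f n) := by
  let g : ℕ → List α := Nat.rec [] fun _ p => s p :: p
  have res_eq : ∀ n, PiNat.res (fun n => s (g n)) n = g n := by
    intro n
    induction n with
    | zero => rfl
    | succ n ih => rw [PiNat.res_succ, ih]
  exact ⟨fun n => s (g n), fun n => congrArg s (res_eq n).symm⟩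

/-- Every branch `f` of the binary tree carries two points `x true f` and `x false f`, and every
node `p` a set `C p`, which contains `x b f` exactly when `f` passes through `p` and continues with
the letter `b` there. As in `PiNat.res`, the last letter of a node is the head of the list. -/
def DetectsTurns (C : List Bool → Set X) (x : Bool → (ℕ → Bool) → X) : Prop :=
  ∀ b f p, x b f ∈ C p ↔ PiNat.res f p.length = p ∧ f p.length = b

/-- The points `x b f` for which the letter `b` occurs infinitely often in the branch `f`. Under
`DetectsTurns` these are the `x b f` that lie in infinitely many node sets. -/
def turnPoints (x : Bool → (ℕ → Bool) → X) : Set X :=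
  {y | ∃ b f, {n | f n = b}.Infinite ∧ x b f = y}

theorem DetectsTurns.infinite_setOf_mem (h : DetectsTurns C x) {y : X} (hy : y ∈ turnPoints x) :
    {p | y ∈ C p}.Infinite := by
  obtain ⟨b, f, hf, rfl⟩ := hy
  have res_inj : Function.Injective (PiNat.res f) := fun m n hmn => by
    simpa only [PiNat.res_length] using congrArg List.length hmn
  refine (hf.image res_inj.injOn).mono ?_
  rintro _ ⟨n, hn, rfl⟩
  refine (h b f _).2 ?_
  rw [PiNat.res_length]
  exact ⟨rfl, hn⟩

/-- Descend the tree by the letter `true` at the nodes in `J` and by `false` at the others. -/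
theorem DetectsTurns.exists_turnPoint_subset_or_subset_compl (h : DetectsTurns C x)
    (J : Set (List Bool)) :
    ∃ y ∈ turnPoints x, {p | y ∈ C p} ⊆ J ∨ {p | y ∈ C p} ⊆ Jᶜ := by
  classical
  obtain ⟨f, hf⟩ := exists_branch fun p => decide (p ∈ J)
  obtain ⟨b, hb⟩ := Finite.exists_infinite_fiber f
  have node_mem_iff : ∀ p, x b f ∈ C p → (p ∈ J ↔ b = true) := by
    intro p hp
    obtain ⟨hres, hturn⟩ := (h b f p).1 hp
    rw [← hturn, hf, hres, decide_eq_true_iff]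
  refine ⟨x b f, ⟨b, f, Set.infinite_coe_iff.1 hb, rfl⟩, ?_⟩
  cases b
  · exact Or.inr fun p hp hpJ => Bool.false_ne_true ((node_mem_iff p hp).1 hpJ)
  · exact Or.inl fun p hp => (node_mem_iff p hp).2 rfl

/-- The family consists of the node sets and of infinitely many copies of each set avoiding the
turn points. -/
theorem DetectsTurns.exists_indecomposable {κ : Type u} {F : κ → Set X} {node : List Bool → κ}
    (h : DetectsTurns (fun p => F (node p)) x)
    (havoid : ∀ y ∉ turnPoints x, ∃ k, y ∈ F k ∧ Disjoint (F k) (turnPoints x)) :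
    ∃ (I : Type u) (k : I → κ), (∀ y, {i | y ∈ F (k i)}.Infinite) ∧
      ¬ ∃ J : Set I, (∀ y, ∃ i ∈ J, y ∈ F (k i)) ∧ ∀ y, ∃ i ∈ Jᶜ, y ∈ F (k i) := by
  let I := List Bool ⊕ {k // Disjoint (F k) (turnPoints x)} × ℕ
  let k : I → κ := Sum.elim node fun i => i.1
  refine ⟨I, k, fun y => ?_, ?_⟩
  · by_cases hy : y ∈ turnPoints x
    · exact ((h.infinite_setOf_mem hy).image Sum.inl_injective.injOn).mono
        (Set.image_subset_iff.2 fun p hp => hp)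
    · obtain ⟨k₀, hyk, hk⟩ := havoid y hy
      exact Set.infinite_of_injective_forall_mem (f := fun n : ℕ => (Sum.inr (⟨k₀, hk⟩, n) : I))
        (fun m n hmn => congrArg Prod.snd (Sum.inr.inj hmn)) fun _ => hyk
  · rintro ⟨J, hJ, hJc⟩
    have node_of_mem : ∀ y ∈ turnPoints x, ∀ i : I, y ∈ F (k i) → ∃ p, i = Sum.inl p := by
      rintro y hy (p | ⟨⟨k₀, hk⟩, n⟩) hyi
      · exact ⟨p, rfl⟩
      · exact absurd hy (Set.disjoint_left.1 hk hyi)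
    obtain ⟨y, hy, hsub | hsub⟩ := h.exists_turnPoint_subset_or_subset_compl (Sum.inl ⁻¹' J)
    · obtain ⟨i, hi, hyi⟩ := hJc y
      obtain ⟨p, rfl⟩ := node_of_mem y hy i hyi
      exact hi (hsub hyi)
    · obtain ⟨i, hi, hyi⟩ := hJ y
      obtain ⟨p, rfl⟩ := node_of_mem y hy i hyi
      exact hsub hyi hi

end BinaryTree

section CantorSet

/-- The letters `true` and `false` read as the signs `1` and `-1`. -/
def turnSign (b : Bool) : ℝ := if b then 1 else -1

@[simp] theorem turnSign_true : turnSign true = 1 := rfl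

@[simp] theorem turnSign_false : turnSign false = -1 := rfl

theorem abs_turnSign (b : Bool) : |turnSign b| = 1 := by cases b <;> simp

/-- The point with address `f` in the ternary Cantor set on `[-1/2, 1/2]`. -/
def cantorPoint (f : ℕ → Bool) : ℝ := ∑' n, turnSign (f n) / 3 ^ (n + 1)

/-- The midpoint of the interval of length `1 / 3 ^ p.length` that contains the Cantor points whose
address begins with `p`. -/
def nodeCenter : List Bool → ℝ
  | [] => 0
  | b :: p => nodeCenter p + turnSign b / 3 ^ (p.length + 1)

/-- The position of the Cantor point `f` relative to the node `p`, in the coordinate that identifies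
the interval of `p` with `[-1/2, 1/2]`. -/
def nodeCoord (p : List Bool) (f : ℕ → Bool) : ℝ :=
  3 ^ p.length * (cantorPoint f - nodeCenter p)

/-- Chosen so that the interval from `-nodeRadius p` to `4 * nodeRadius p` around the midpoint of
`p` reaches to the end of the right third and not into the left third. -/
def nodeRadius (p : List Bool) : ℝ := 1 / 8 / 3 ^ p.length

theorem hasSum_one_div_three_pow : HasSum (fun n : ℕ => 1 / (3 : ℝ) ^ (n + 1)) (1 / 2) := by
  have h := (hasSum_geometric_of_lt_one (r := (1 / 3 : ℝ)) (by norm_num) (by norm_num)).mul_left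
    (1 / 3)
  norm_num only at h
  simp only [← pow_succ'] at h
  simpa only [one_div_pow] using h

theorem norm_turnSign_div_le (f : ℕ → Bool) (n : ℕ) :
    ‖turnSign (f n) / 3 ^ (n + 1)‖ ≤ 1 / 3 ^ (n + 1) := by
  rw [norm_div, Real.norm_eq_abs, abs_turnSign, norm_pow, Real.norm_ofNat]

theorem abs_cantorPoint_le (f : ℕ → Bool) : |cantorPoint f| ≤ 1 / 2 :=
  tsum_of_norm_bounded hasSum_one_div_three_pow (norm_turnSign_div_le f)

theorem cantorPoint_eq_head_add_tail (f : ℕ → Bool) :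
    cantorPoint f = (turnSign (f 0) + cantorPoint fun k => f (k + 1)) / 3 := by
  have summable : Summable fun n => turnSign (f n) / 3 ^ (n + 1) :=
    .of_norm_bounded hasSum_one_div_three_pow.summable (norm_turnSign_div_le f)
  rw [cantorPoint, summable.tsum_eq_zero_add, cantorPoint, add_div, ← tsum_div_const]
  simp only [zero_add, pow_one, pow_succ _ (_ + 1), div_div]

theorem abs_nodeCenter_le (p : List Bool) : |nodeCenter p| ≤ 1 / 2 := by
  suffices h : |nodeCenter p| + 1 / 2 / 3 ^ p.length ≤ 1 / 2 from
    (le_add_of_nonneg_right (by positivity)).trans h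
  induction p with
  | nil => simp [nodeCenter]
  | cons b p ih =>
    have step : |nodeCenter (b :: p)| ≤ |nodeCenter p| + 1 / 3 ^ (p.length + 1) := by
      refine (abs_add_le _ _).trans_eq ?_
      rw [abs_div, abs_turnSign, abs_of_pos (by positivity : (0 : ℝ) < 3 ^ (p.length + 1))]
    calc |nodeCenter (b :: p)| + 1 / 2 / 3 ^ (p.length + 1)
        ≤ |nodeCenter p| + (1 / 3 ^ (p.length + 1) + 1 / 2 / 3 ^ (p.length + 1)) := by linarith
      _ = |nodeCenter p| + 1 / 2 / 3 ^ p.length := by rw [pow_succ]; field_simp; ring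
      _ ≤ 1 / 2 := ih

theorem nodeRadius_pos (p : List Bool) : 0 < nodeRadius p := by unfold nodeRadius; positivity

theorem nodeRadius_le (p : List Bool) : nodeRadius p ≤ 1 / 8 :=
  div_le_self (by norm_num) (one_le_pow₀ (by norm_num))

theorem nodeCoord_cons (b : Bool) (p : List Bool) (f : ℕ → Bool) :
    nodeCoord (b :: p) f = 3 * nodeCoord p f - turnSign b := by
  rw [nodeCoord, nodeCoord, nodeCenter, List.length_cons, pow_succ]
  field_simp
  ring

theorem nodeCoord_res (f : ℕ → Bool) (n : ℕ) :
    nodeCoord (PiNat.res f n) f = cantorPoint fun k => f (n + k) := by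
  induction n with
  | zero => simp [nodeCoord, nodeCenter]
  | succ n ih =>
    rw [PiNat.res_succ, nodeCoord_cons, ih, cantorPoint_eq_head_add_tail]
    simp only [add_zero, add_assoc, add_comm 1]
    ring

theorem three_mul_nodeCoord_of_res_eq {f : ℕ → Bool} {p : List Bool}
    (h : PiNat.res f p.length = p) :
    ∃ t, |t| ≤ 1 / 2 ∧ 3 * nodeCoord p f = turnSign (f p.length) + t := by
  refine ⟨_, abs_cantorPoint_le fun k => f (p.length + (k + 1)), ?_⟩
  conv_lhs => rw [← h, nodeCoord_res, cantorPoint_eq_head_add_tail]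
  rw [add_zero, mul_div_cancel₀ _ three_ne_zero]

theorem res_eq_of_abs_nodeCoord_le {f : ℕ → Bool} {p : List Bool} (h : |nodeCoord p f| ≤ 1 / 2) :
    PiNat.res f p.length = p := by
  induction p with
  | nil => rfl
  | cons b p ih =>
    rw [nodeCoord_cons, abs_le] at h
    have hp : PiNat.res f p.length = p := by
      refine ih (abs_le.2 ?_)
      have := abs_le.1 (abs_turnSign b).le
      constructor <;> linarith
    have hb : f p.length = b := by
      obtain ⟨t, ht, h3⟩ := three_mul_nodeCoord_of_res_eq hp
      rw [h3] at h
      have := abs_le.1 ht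
      cases hf : f p.length <;> cases b <;> simp only [hf, turnSign_true, turnSign_false] at h <;>
        first | rfl | (exfalso; linarith)
    rw [List.length_cons, PiNat.res_succ, hp, hb]

theorem turnSign_mul_cantorPoint_sub_mem_Icc_iff (b : Bool) (f : ℕ → Bool) (p : List Bool) :
    turnSign b * (cantorPoint f - nodeCenter p) ∈ Set.Icc (-nodeRadius p) (4 * nodeRadius p) ↔
      PiNat.res f p.length = p ∧ f p.length = b := by
  have hpow : (0 : ℝ) < 3 ^ p.length := by positivity
  have rescale : turnSign b * (cantorPoint f - nodeCenter p) ∈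
      Set.Icc (-nodeRadius p) (4 * nodeRadius p) ↔
      turnSign b * nodeCoord p f ∈ Set.Icc (-(1 / 8) : ℝ) (1 / 2) := by
    rw [nodeRadius, ← neg_div, ← mul_div_assoc, Set.mem_Icc, Set.mem_Icc, div_le_iff₀ hpow,
      le_div_iff₀ hpow, nodeCoord, mul_left_comm, mul_comm (3 ^ p.length)]
    norm_num only
  rw [rescale]
  constructor
  · rintro ⟨h₁, h₂⟩
    have hp : PiNat.res f p.length = p := by
      refine res_eq_of_abs_nodeCoord_le ?_
      have : |turnSign b * nodeCoord p f| ≤ 1 / 2 := abs_le.2 ⟨by linarith, h₂⟩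
      rwa [abs_mul, abs_turnSign, one_mul] at this
    obtain ⟨t, ht, h3⟩ := three_mul_nodeCoord_of_res_eq hp
    refine ⟨hp, ?_⟩
    have := abs_le.1 ht
    cases b <;> cases hf : f p.length <;>
      simp only [hf, turnSign_true, turnSign_false] at h₁ h3 <;> first | rfl | (exfalso; linarith)
  · rintro ⟨hp, rfl⟩
    obtain ⟨t, ht, h3⟩ := three_mul_nodeCoord_of_res_eq hp
    have := abs_le.1 ht
    cases hf : f p.length <;> simp only [hf, turnSign_true, turnSign_false] at h3 ⊢ <;>
      constructor <;> linarith

end CantorSet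

section Copies

variable {E : Type*} [AddCommGroup E] [Module ℝ E] {S : Set E}

/-- The homothetic copy of `S` with ratio `c` that carries the point `z` to `y`. -/
def copyAt (S : Set E) (c : ℝ) (z y : E) : Set E := (fun x => c • (x - z) + y) '' S

theorem mem_copyAt_self {c : ℝ} {z y : E} (hz : z ∈ S) : y ∈ copyAt S c z y :=
  ⟨z, hz, by simp⟩

theorem mem_copyAt_one_iff {z y x : E} : x ∈ copyAt S 1 z y ↔ x - y + z ∈ S := by
  constructor
  · rintro ⟨w, hw, rfl⟩
    simpa using hw
  · exact fun h => ⟨_, h, by simp⟩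

theorem copyAt_eq_copyAt (S : Set E) (c : ℝ) (z w y : E) :
    copyAt S c z y = copyAt S c w (y + c • (w - z)) := by
  refine Set.image_congr fun x _ => ?_
  module

/-- For a convex set `S`, the chord of `S` through `z` in the direction `e` is shorter than `e`. -/
def ShortChord (S : Set E) (z e : E) : Prop := ∀ s : ℝ, z + s • e ∈ S → z + (s + 1) • e ∉ S

/-- If the chords through `z` and `w` had the length of `e`, then so would the chord halfway between
them; but that one ends at the extreme points `v` and `v + e`. -/
theorem shortChord_or_shortChord (hS : Convex ℝ S) {v e z w : E} {x : ℝ} (he : e ≠ 0)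
    (hv : v ∈ S.extremePoints ℝ) (hve : v + e ∈ S.extremePoints ℝ)
    (hzw : (1 / 2 : ℝ) • z + (1 / 2 : ℝ) • w = v + x • e) (hz : ∀ s : ℝ, z + s • e ≠ v) :
    ShortChord S z e ∨ ShortChord S w e := by
  by_contra! h
  simp only [ShortChord, not_forall, not_not] at h
  obtain ⟨⟨s, hs, hs'⟩, t, ht, ht'⟩ := h
  let x' := x + (s + t) / 2
  have midpoint (i : ℝ) : (1 / 2 : ℝ) • (z + (s + i) • e) + (1 / 2 : ℝ) • (w + (t + i) • e) =
      v + (x' + i) • e := by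
    linear_combination (norm := module) hzw
  have start_mem : v + (x' + 0) • e ∈ S :=
    midpoint 0 ▸ hS (by rwa [add_zero]) (by rwa [add_zero]) (by norm_num) (by norm_num)
      (by norm_num)
  have end_mem : v + (x' + 1) • e ∈ S :=
    midpoint 1 ▸ hS hs' ht' (by norm_num) (by norm_num) (by norm_num)
  rw [add_zero] at start_mem
  rcases lt_trichotomy x' 0 with hneg | hzero | hpos
  · have denom_ne : 1 - x' ≠ 0 := by linarith
    have mem : v ∈ openSegment ℝ (v + e) (v + x' • e) := by
      refine ⟨-x' / (1 - x'), 1 / (1 - x'), by bound, by bound, by field_simp; ring, ?_⟩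
      match_scalars <;> field_simp <;> ring
    exact he (add_eq_left.1 (hv.2 hve.1 start_mem mem))
  · have mem : v ∈ openSegment ℝ (z + s • e) (w + t • e) := by
      refine ⟨1 / 2, 1 / 2, by norm_num, by norm_num, by norm_num, ?_⟩
      simpa only [add_zero, hzero, zero_smul] using midpoint 0
    exact hz s (hv.2 hs ht mem)
  · have mem : v + e ∈ openSegment ℝ v (v + (x' + 1) • e) := by
      refine ⟨x' / (x' + 1), 1 / (x' + 1), by bound, by bound, by field_simp, ?_⟩
      match_scalars <;> field_simp
    exact he (left_eq_add.1 (hve.2 hv.1 end_mem mem))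

end Copies

section AvoidingCopies

variable {E : Type*} [NormedAddCommGroup E] [NormedSpace ℝ E] {S : Set E}

theorem isCompact_copyAt (hS : IsCompact S) (c : ℝ) (z y : E) : IsCompact (copyAt S c z y) :=
  hS.image (by fun_prop)

theorem exists_copyAt_subset_halfSpace (hS : IsCompact S) (hne : S.Nonempty) (f : E →L[ℝ] ℝ)
    (y : E) : ∃ z ∈ S, ∀ x ∈ copyAt S 1 z y, f y ≤ f x := by
  obtain ⟨z, hz, hmin⟩ := hS.exists_isMinOn hne f.continuous.continuousOn
  refine ⟨z, hz, ?_⟩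
  rintro _ ⟨x, hx, rfl⟩
  simpa using hmin hx

theorem exists_copyAt_disjoint_of_notMem (hS : IsCompact S) (hne : S.Nonempty) {T : Set E}
    (hT : Convex ℝ T) (hTc : IsClosed T) {y : E} (hy : y ∉ T) :
    ∃ z ∈ S, Disjoint (copyAt S 1 z y) T := by
  obtain ⟨f, u, hfT, hfy⟩ := geometric_hahn_banach_closed_point hT hTc hy
  obtain ⟨z, hz, hcopy⟩ := exists_copyAt_subset_halfSpace hS hne f y
  exact ⟨z, hz, Set.disjoint_left.2 fun x hx hxT =>
    ((hfy.trans_le (hcopy x hx)).trans (hfT x hxT)).false⟩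

theorem exists_copyAt_disjoint_of_shortChord (hS : IsCompact S) (hconv : Convex ℝ S) {z e : E}
    (hz : z ∈ S) (he : e ≠ 0) (hshort : ShortChord S z e) (v : E) {x : ℝ} (hx₀ : 0 < x)
    (hx₁ : x < 1) : ∃ z₀ ∈ S, Disjoint (copyAt S 1 z₀ (v + x • e)) {v, v + e} := by
  let T : Set ℝ := {s | z + s • e ∈ S}
  have hT : IsCompact T := ((Homeomorph.addLeft z).isClosedEmbedding.comp
    (isClosedEmbedding_smul_left he)).isCompact_preimage hS
  have hTne : T.Nonempty := ⟨0, by simpa [T] using hz⟩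
  have hTconv : Convex ℝ T :=
    (hconv.translate_preimage_right z).linear_preimage (LinearMap.toSpanSingleton ℝ E e)
  obtain ⟨a, ha, hmin⟩ := hT.exists_isLeast hTne
  obtain ⟨b, hb, hmax⟩ := hT.exists_isGreatest hTne
  have hlen : b < a + 1 := by
    by_contra! hab
    exact hshort a ha (hTconv.ordConnected.out ha hb ⟨by linarith, hab⟩)
  have s₀_mem : (1 - x) * a + x * b ∈ T := hTconv ha hb (by linarith) hx₀.le (by ring)
  refine ⟨_, s₀_mem, ?_⟩
  rw [Set.disjoint_right]
  rintro _ (rfl | rfl) h <;> rw [mem_copyAt_one_iff] at h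
  · have lower : z + ((1 - x) * a + x * b - x) • e ∈ S := by convert h using 1; module
    nlinarith [hmin lower]
  · have upper : z + ((1 - x) * a + x * b + (1 - x)) • e ∈ S := by convert h using 1; module
    nlinarith [hmax upper]

theorem exists_copyAt_disjoint_pair (hS : IsCompact S) (hconv : Convex ℝ S) {z e : E}
    (hz : z ∈ S) (he : e ≠ 0) (hshort : ShortChord S z e) {v y : E}
    (hy : y ∉ ({v, v + e} : Set E)) :
    ∃ z₀ ∈ S, Disjoint (copyAt S 1 z₀ y) {v, v + e} := by
  by_cases hseg : y ∈ convexHull ℝ {v, v + e}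
  · rw [convexHull_pair, segment_eq_image', add_sub_cancel_left] at hseg
    obtain ⟨x, ⟨hx₀, hx₁⟩, rfl⟩ := hseg
    have x_ne_zero : x ≠ 0 := by rintro rfl; simp at hy
    have x_ne_one : x ≠ 1 := by rintro rfl; simp at hy
    exact exists_copyAt_disjoint_of_shortChord hS hconv hz he hshort v
      (hx₀.lt_of_ne' x_ne_zero) (hx₁.lt_of_ne x_ne_one)
  · obtain ⟨z₀, hz₀, hdisj⟩ := exists_copyAt_disjoint_of_notMem hS ⟨z, hz⟩
      (convex_convexHull ℝ {v, v + e}) ((Set.toFinite {v, v + e}).isClosed_convexHull ℝ) hseg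
    exact ⟨z₀, hz₀, hdisj.mono_right (subset_convexHull ℝ _)⟩

theorem exists_uniform_thickening (hS : IsCompact S) (c : ℝ) {K V : Set E} (hK : IsCompact K)
    (hV : IsClosed V) (h : ∀ y ∈ K, ∃ z ∈ S, Disjoint (copyAt S c z y) V) :
    ∃ r > 0, ∀ y ∈ K, ∃ z ∈ S, Disjoint (copyAt S c z y) (Metric.thickening r V) := by
  refine hK.induction_on ⟨1, one_pos, by simp⟩ ?_ ?_ ?_
  · rintro s t hst ⟨r, hr, ht⟩
    exact ⟨r, hr, fun y hy => ht y (hst hy)⟩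
  · rintro s t ⟨r, hr, hs⟩ ⟨r', hr', ht⟩
    refine ⟨min r r', lt_min hr hr', fun y hy => ?_⟩
    rcases hy with hy | hy
    · obtain ⟨z, hz, hd⟩ := hs y hy
      exact ⟨z, hz, hd.mono_right (Metric.thickening_mono (min_le_left ..) V)⟩
    · obtain ⟨z, hz, hd⟩ := ht y hy
      exact ⟨z, hz, hd.mono_right (Metric.thickening_mono (min_le_right ..) V)⟩
  · intro y hy
    obtain ⟨z, hz, hd⟩ := h y hy
    obtain ⟨r, hr, hd⟩ := hd.exists_thickenings (isCompact_copyAt hS c z y) hV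
    refine ⟨Metric.ball y r, mem_nhdsWithin_of_mem_nhds (Metric.ball_mem_nhds y hr), r, hr, ?_⟩
    refine fun y' hy' => ⟨z, hz, hd.mono_left ?_⟩
    rintro _ ⟨x, hx, rfl⟩
    refine Metric.mem_thickening_iff.2 ⟨_, ⟨x, hx, rfl⟩, ?_⟩
    simpa only [dist_add_left, Metric.mem_ball] using hy'

/-- Two points `v true ≠ v false` of `S`, each the unique maximiser on `S` of its functional. -/
structure ExposedPair (S : Set E) (v : Bool → E) (φ : Bool → E →L[ℝ] ℝ) : Prop where
  mem : ∀ b, v b ∈ S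
  le : ∀ b, ∀ x ∈ S, φ b x ≤ φ b (v b)
  eq_of_le : ∀ b, ∀ x ∈ S, φ b (v b) ≤ φ b x → x = v b
  ne : v true ≠ v false

/-- The union, over the two points `v b`, of the parts of the level sets of `φ b` through `v b` at
distance less than `r` from `v b`. -/
def levelPieces (v : Bool → E) (φ : Bool → E →L[ℝ] ℝ) (r : ℝ) : Set E :=
  {x | ∃ b, dist x (v b) < r ∧ φ b x = φ b (v b)}

theorem levelPieces_subset_thickening (v : Bool → E) (φ : Bool → E →L[ℝ] ℝ) (r : ℝ) :
    levelPieces v φ r ⊆ Metric.thickening r (Set.range v) := by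
  rintro x ⟨b, hx, -⟩
  exact Metric.mem_thickening_iff.2 ⟨v b, ⟨b, rfl⟩, hx⟩

theorem levelPieces_mono (v : Bool → E) (φ : Bool → E →L[ℝ] ℝ) {r r' : ℝ} (h : r ≤ r') :
    levelPieces v φ r ⊆ levelPieces v φ r' :=
  fun _ ⟨b, hx, hlevel⟩ => ⟨b, hx.trans_le h, hlevel⟩

namespace ExposedPair

variable {v : Bool → E} {φ : Bool → E →L[ℝ] ℝ}

theorem ne_not (h : ExposedPair S v φ) (b : Bool) : v (!b) ≠ v b := by
  cases b
  · exact h.ne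
  · exact h.ne.symm

theorem lt (h : ExposedPair S v φ) (b : Bool) : φ b (v !b) < φ b (v b) :=
  lt_of_not_ge fun hle => h.ne_not b (h.eq_of_le b _ (h.mem _) hle)

theorem exists_radius_lt (h : ExposedPair S v φ) :
    ∃ r > 0, ∀ b x, dist x (v !b) < r → φ b x < φ b (v b) := by
  have (b : Bool) : ∃ r > 0, ∀ x, dist x (v !b) < r → φ b x < φ b (v b) :=
    Metric.eventually_nhds_iff.1 ((φ b).continuous.continuousAt.eventually_lt_const (h.lt b))
  choose r hr hlt using this
  refine ⟨min (r true) (r false), lt_min (hr _) (hr _), ?_⟩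
  rintro (_ | _) x hx
  · exact hlt _ x (hx.trans_le (min_le_right ..))
  · exact hlt _ x (hx.trans_le (min_le_left ..))

theorem exists_copyAt_disjoint_of_lt (h : ExposedPair S v φ) (hS : IsCompact S) {r : ℝ}
    (hr : ∀ b x, dist x (v !b) < r → φ b x < φ b (v b)) {b : Bool} {y : E}
    (hy : φ b (v b) < φ b y) : ∃ z ∈ S, Disjoint (copyAt S 1 z y) (levelPieces v φ r) := by
  obtain ⟨z, hz, hcopy⟩ := exists_copyAt_subset_halfSpace hS ⟨v b, h.mem b⟩ (φ b) y
  refine ⟨z, hz, Set.disjoint_left.2 ?_⟩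
  rintro x hx ⟨b', hdist, hlevel⟩
  have hlt := hy.trans_le (hcopy x hx)
  rcases Bool.eq_or_eq_not b' b with rfl | rfl
  · exact hlt.ne' hlevel
  · exact hlt.not_gt (hr b x hdist)

/-- The copy with tip `v b` at `y` meets the level piece of `v b` at most in `y` itself, and being
smaller than `S` it does not reach the other one. -/
theorem disjoint_copyAt_of_lt (h : ExposedPair S v φ) {c : ℝ} (hc : 0 < c) {b : Bool} {y : E}
    (hle : φ b y ≤ φ b (v b))
    (hlt : φ (!b) y < φ (!b) (v !b) - c * (φ (!b) (v !b) - φ (!b) (v b))) {r : ℝ} {X : Set E}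
    (hX : X ⊆ levelPieces v φ r) (hy : y ∉ X) : Disjoint (copyAt S c (v b) y) X := by
  refine Set.disjoint_left.2 ?_
  rintro _ ⟨x, hx, rfl⟩ hxX
  obtain ⟨b', -, hlevel⟩ := hX hxX
  simp only [map_add, map_smul, map_sub, smul_eq_mul] at hlevel
  rcases Bool.eq_or_eq_not b' b with rfl | rfl
  · have hge : φ b' (v b') ≤ φ b' x := by
      by_contra! hx'
      nlinarith
    obtain rfl := h.eq_of_le b' x hx hge
    exact hy (by simpa using hxX)
  · nlinarith [h.le (!b) x hx]

theorem exists_copyAt_disjoint_of_notMem_cthickening (h : ExposedPair S v φ) (hS : IsCompact S)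
    {r : ℝ} {y : E} (hy : y ∉ Metric.cthickening r (convexHull ℝ (Set.range v))) :
    ∃ z ∈ S, Disjoint (copyAt S 1 z y) (levelPieces v φ r) := by
  obtain ⟨z, hz, hdisj⟩ := exists_copyAt_disjoint_of_notMem hS ⟨_, h.mem true⟩
    ((convex_convexHull ℝ (Set.range v)).cthickening r) Metric.isClosed_cthickening hy
  refine ⟨z, hz, hdisj.mono_right ((levelPieces_subset_thickening v φ r).trans ?_)⟩
  exact (Metric.thickening_subset_of_subset r (subset_convexHull ℝ _)).trans
    (Metric.thickening_subset_cthickening ..)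

theorem exists_radius_copyAt_disjoint (h : ExposedPair S v φ) (hS : IsCompact S)
    (hconv : Convex ℝ S) {z : E} (hz : z ∈ S) (hshort : ShortChord S z (v false - v true))
    {K : Set E} (hK : IsCompact K) (hKv : ∀ b, v b ∉ K) :
    ∃ r > 0, ∀ y ∈ K, ∃ z ∈ S, Disjoint (copyAt S 1 z y) (levelPieces v φ r) := by
  have range_eq : Set.range v = {v true, v true + (v false - v true)} := by
    rw [add_sub_cancel, Set.pair_comm]
    simp
  obtain ⟨r, hr, havoid⟩ := exists_uniform_thickening hS 1 hK (Set.finite_range v).isClosed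
    fun y hy => by
      rw [range_eq]
      refine exists_copyAt_disjoint_pair hS hconv hz (sub_ne_zero.2 h.ne.symm) hshort ?_
      rw [← range_eq]
      rintro ⟨b, rfl⟩
      exact hKv b hy
  refine ⟨r, hr, fun y hy => ?_⟩
  obtain ⟨w, hw, hdisj⟩ := havoid y hy
  exact ⟨w, hw, hdisj.mono_right (levelPieces_subset_thickening v φ r)⟩

/-- Far from the points `v b`, or beyond the level set of one of them, half-space arguments work.
Close to `v b` a copy with its tip at `y` does. The other points form a compact set, for which it
suffices to avoid the two points `v b`. -/
theorem exists_radius_forall_exists_copyAt_disjoint [ProperSpace E] (h : ExposedPair S v φ)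
    (hS : IsCompact S) (hconv : Convex ℝ S) {z : E} (hz : z ∈ S)
    (hshort : ShortChord S z (v false - v true)) {ε : ℝ} (hε₀ : 0 < ε) (hε₁ : ε < 1) :
    ∃ r > 0, ∀ X ⊆ levelPieces v φ r, ∀ y ∉ X,
      ∃ c ∈ Set.Icc (1 - ε) 1, ∃ z ∈ S, Disjoint (copyAt S c z y) X := by
  let B : Set E := Metric.cthickening 1 (convexHull ℝ (Set.range v))
  let threshold (b : Bool) : ℝ := φ (!b) (v !b) - (1 - ε) * (φ (!b) (v !b) - φ (!b) (v b))
  let K : Set E := B ∩ ⋂ b, {y | threshold b ≤ φ (!b) y}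
  have hK : IsCompact K :=
    ((Set.finite_range v).isCompact_convexHull ℝ).cthickening.inter_right <|
      isClosed_iInter fun b => isClosed_le continuous_const (φ !b).continuous
  have hKv : ∀ b, v b ∉ K := by
    rintro b ⟨-, hb⟩
    have hlt := h.lt !b
    rw [Bool.not_not] at hlt
    nlinarith [show threshold b ≤ φ (!b) (v b) from Set.mem_iInter.1 hb b]
  obtain ⟨r₁, hr₁, hmiddle⟩ := h.exists_radius_copyAt_disjoint hS hconv hz hshort hK hKv
  obtain ⟨r₂, hr₂, hlt⟩ := h.exists_radius_lt
  refine ⟨min (min r₁ r₂) 1, by positivity, fun X hX y hy => ?_⟩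
  suffices hcopy : (∃ z ∈ S, ∃ r ∈ ({r₁, r₂, 1} : Set ℝ),
      Disjoint (copyAt S 1 z y) (levelPieces v φ r)) ∨
      ∃ b, Disjoint (copyAt S (1 - ε) (v b) y) X by
    obtain ⟨w, hw, r, hr, hdisj⟩ | ⟨b, hdisj⟩ := hcopy
    · refine ⟨1, ⟨by linarith, le_rfl⟩, w, hw, hdisj.mono_right (hX.trans ?_)⟩
      exact levelPieces_mono v φ (by rcases hr with rfl | rfl | rfl <;> simp)
    · exact ⟨1 - ε, ⟨le_rfl, by linarith⟩, v b, h.mem b, hdisj⟩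
  by_cases hfar : y ∉ B
  · obtain ⟨w, hw, hdisj⟩ := h.exists_copyAt_disjoint_of_notMem_cthickening hS hfar
    exact Or.inl ⟨w, hw, 1, by simp, hdisj⟩
  by_cases hbeyond : ∃ b, φ b (v b) < φ b y
  · obtain ⟨b, hb⟩ := hbeyond
    obtain ⟨w, hw, hdisj⟩ := h.exists_copyAt_disjoint_of_lt hS hlt hb
    exact Or.inl ⟨w, hw, r₂, by simp, hdisj⟩
  push Not at hfar hbeyond
  by_cases hnear : ∃ b, φ (!b) y < threshold b
  · obtain ⟨b, hb⟩ := hnear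
    exact Or.inr ⟨b, h.disjoint_copyAt_of_lt (by linarith) (hbeyond b) hb hX hy⟩
  · push Not at hnear
    obtain ⟨w, hw, hdisj⟩ := hmiddle y ⟨hfar, Set.mem_iInter.2 hnear⟩
    exact Or.inl ⟨w, hw, r₁, by simp, hdisj⟩

end ExposedPair

end AvoidingCopies

section Corners

open Module

variable {E : Type*} [AddCommGroup E] [Module ℝ E] {S : Set E} {v q : E}
  {B D : Basis (Fin 2) ℝ E}

theorem coord_smul_add_coord_smul (B : Basis (Fin 2) ℝ E) (x : E) :
    B.coord 0 x • B 0 + B.coord 1 x • B 1 = x := by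
  rw [← Fin.sum_univ_two fun i => B.coord i x • B i]
  exact B.sum_repr x

/-- Near `v`, the set `S` is the angle with apex `v` and edge directions `B 0, B 1`. -/
structure HasCorner (S : Set E) (v : E) (B : Basis (Fin 2) ℝ E) : Prop where
  coord_nonneg : ∀ x ∈ S, ∀ i, 0 ≤ B.coord i (x - v)
  exists_mem : ∃ ρ > 0, ∀ x, (∀ i, B.coord i (x - v) ∈ Set.Icc 0 ρ) → x ∈ S

namespace HasCorner

theorem mem (h : HasCorner S v B) : v ∈ S := by
  obtain ⟨ρ, hρ, hmem⟩ := h.exists_mem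
  exact hmem v fun i => by simpa using hρ.le

theorem exists_add_smul_mem (h : HasCorner S v B) :
    ∃ t > (0 : ℝ), ∀ i, v + t • B i ∈ S := by
  obtain ⟨ρ, hρ, hmem⟩ := h.exists_mem
  refine ⟨ρ, hρ, fun j => hmem _ fun i => ?_⟩
  rw [add_sub_cancel_left, map_smul, Basis.coord_apply, Basis.repr_self, smul_eq_mul]
  obtain rfl | hij := eq_or_ne j i <;> simp [*, hρ.le]

theorem mem_copyAt_iff (h : HasCorner S v B) {ρ : ℝ}
    (hρ : ∀ x, (∀ i, B.coord i (x - v) ∈ Set.Icc 0 ρ) → x ∈ S) {c : ℝ} (hc : 0 < c) {x y : E}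
    (hx : ∀ i, B.coord i (x - y) ≤ c * ρ) :
    x ∈ copyAt S c v y ↔ ∀ i, 0 ≤ B.coord i (x - y) := by
  constructor
  · rintro ⟨z, hz, rfl⟩ i
    simpa only [add_sub_cancel_right, map_smul, smul_eq_mul] using
      mul_nonneg hc.le (h.coord_nonneg z hz i)
  · intro hnonneg
    refine ⟨v + c⁻¹ • (x - y), hρ _ fun i => ?_, ?_⟩
    · rw [add_sub_cancel_left, map_smul, smul_eq_mul]
      exact ⟨mul_nonneg (inv_nonneg.2 hc.le) (hnonneg i), (inv_mul_le_iff₀ hc).2 (hx i)⟩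
    · simp only [add_sub_cancel_left, smul_inv_smul₀ hc.ne', sub_add_cancel]

theorem of_convex (hS : Convex ℝ S) (hv : v ∈ S) (hcoord : ∀ x ∈ S, ∀ i, 0 ≤ B.coord i (x - v))
    (hedge : ∀ i, v + B i ∈ S) : HasCorner S v B := by
  refine ⟨hcoord, 1 / 2, by norm_num, fun x hx => ?_⟩
  have edge_mem (i : Fin 2) : v + (2 * B.coord i (x - v)) • B i ∈ S :=
    (hS.starConvex hv).add_smul_mem (hedge i) (by linarith [(hx i).1]) (by linarith [(hx i).2])
  convert hS (edge_mem 0) (edge_mem 1) (a := 1 / 2) (b := 1 / 2) (by norm_num) (by norm_num)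
    (by norm_num) using 1
  linear_combination (norm := module) -coord_smul_add_coord_smul B (x - v)

theorem unitsSMul (h : HasCorner S v B) {w : Fin 2 → ℝˣ} (hw : ∀ i, 0 < (w i : ℝ)) :
    HasCorner S v (B.unitsSMul w) := by
  have coord_eq (i : Fin 2) (x : E) : (B.unitsSMul w).coord i x = (w i : ℝ)⁻¹ * B.coord i x := by
    rw [Basis.coord_unitsSMul]
    simp [Units.smul_def]
  obtain ⟨ρ, hρ, hmem⟩ := h.exists_mem
  have w_le (i : Fin 2) : (w i : ℝ) ≤ w 0 + w 1 := by
    fin_cases i <;> simp [(hw _).le]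
  refine ⟨fun x hx i => ?_, ρ / (w 0 + w 1), div_pos hρ (add_pos (hw 0) (hw 1)), fun x hx => ?_⟩
  · rw [coord_eq]
    exact mul_nonneg (inv_nonneg.2 (hw i).le) (h.coord_nonneg x hx i)
  · refine hmem x fun i => ?_
    have hxi := hx i
    rw [coord_eq, Set.mem_Icc, inv_mul_le_iff₀ (hw i), mul_nonneg_iff_of_pos_left
      (inv_pos.2 (hw i))] at hxi
    refine ⟨hxi.1, hxi.2.trans ?_⟩
    rw [mul_div_left_comm]
    exact mul_le_of_le_one_right hρ.le (div_le_one_of_le₀ (w_le i) (add_pos (hw 0) (hw 1)).le)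

theorem swap (h : HasCorner S v B) : HasCorner S v (B.reindex (Equiv.swap 0 1)) := by
  obtain ⟨ρ, hρ, hmem⟩ := h.exists_mem
  have coord_eq (i : Fin 2) (x : E) :
      (B.reindex (Equiv.swap 0 1)).coord i x = B.coord (Equiv.swap 0 1 i) x := by
    simp
  refine ⟨fun x hx i => ?_, ρ, hρ, fun x hx => hmem x fun i => ?_⟩
  · rw [coord_eq]
    exact h.coord_nonneg x hx _
  · simpa [coord_eq] using hx (Equiv.swap 0 1 i)

theorem exists_add_eq (h : HasCorner S v B) {x : E} (hx : ∀ i, 0 < B.coord i x) :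
    ∃ B' : Basis (Fin 2) ℝ E, HasCorner S v B' ∧ B' 0 + B' 1 = x := by
  let w (i : Fin 2) : ℝˣ := Units.mk0 (B.coord i x) (hx i).ne'
  refine ⟨B.unitsSMul w, h.unitsSMul hx, ?_⟩
  rw [Basis.unitsSMul_apply, Basis.unitsSMul_apply]
  exact coord_smul_add_coord_smul B x

/-- A coordinate at `q` vanishing at `v` would be minimal on `S` at `v`, hence nonnegative on the
edges at `v`. As `q - v` is a positive combination of these, it would vanish on both. -/
theorem coord_pos (hv : HasCorner S v B) (hq : HasCorner S q D)
    (hpos : ∀ i, 0 < B.coord i (q - v)) (i : Fin 2) : 0 < D.coord i (v - q) := by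
  refine (hq.coord_nonneg v hv.mem i).lt_of_ne' fun hzero => ?_
  obtain ⟨t, ht, hedge⟩ := hv.exists_add_smul_mem
  have edge_nonneg (j : Fin 2) : 0 ≤ D.coord i (B j) := by
    have := hq.coord_nonneg _ (hedge j) i
    rwa [add_sub_right_comm, map_add, hzero, zero_add, map_smul, smul_eq_mul,
      mul_nonneg_iff_of_pos_left ht] at this
  have sum_eq_zero : ∑ j, B.coord j (q - v) * D.coord i (B j) = 0 := by
    have hqv : D.coord i (q - v) = 0 := by rw [← neg_sub, map_neg, hzero, neg_zero]
    rw [Fin.sum_univ_two]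
    simpa only [map_add, map_smul, smul_eq_mul, hqv] using
      congrArg (D.coord i) (coord_smul_add_coord_smul B (q - v))
  rw [Finset.sum_eq_zero_iff_of_nonneg fun j _ => mul_nonneg (hpos j).le (edge_nonneg j)]
    at sum_eq_zero
  have coord_zero : D.coord i = 0 := B.ext fun j =>
    (mul_eq_zero.1 (sum_eq_zero j (Finset.mem_univ j))).resolve_left (hpos j).ne'
  simpa using congrArg (fun f : E →ₗ[ℝ] ℝ => f (D i)) coord_zero

end HasCorner

/-- Two vertices of `S` at which `S` forms corners, with edge directions normalised so that the
edge sums are parallel to the line through the vertices and the edges number `0` end at equal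
distances on opposite sides of it. -/
structure OppositeCorners (S : Set E) where
  vertex : Bool → E
  basis : Bool → Basis (Fin 2) ℝ E
  ratio : Bool → ℝ
  offset : ℝ
  hasCorner : ∀ b, HasCorner S (vertex b) (basis b)
  edge_add_edge : ∀ b, basis b 0 + basis b 1 = ratio b • (vertex (!b) - vertex b)
  edge_add_opposite_edge :
    basis true 0 + basis false 0 = offset • (vertex false - vertex true)

namespace HasCorner

/-- With `x` and `y` the coordinates of `B 0`, one has `B 0 + (y - x) • D 0 = y • (D 0 + D 1)`:
hence the scale of the second basis. -/
theorem nonempty_oppositeCorners_of_lt (hv : HasCorner S v B) (hq : HasCorner S q D)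
    (hB : B 0 + B 1 = q - v) (hD : D 0 + D 1 = v - q)
    (hlt : D.coord 0 (B 0) < D.coord 1 (B 0)) : Nonempty (OppositeCorners S) := by
  set x := D.coord 0 (B 0)
  set y := D.coord 1 (B 0)
  have combination : x • D 0 + y • D 1 = B 0 := coord_smul_add_coord_smul D (B 0)
  let w := Units.mk0 (y - x) (sub_pos.2 hlt).ne'
  have hw (j : Fin 2) : D.unitsSMul (fun _ => w) j = (y - x) • D j := Basis.unitsSMul_apply ..
  refine ⟨{
    vertex := fun b => bif b then v else q
    basis := fun b => bif b then B else D.unitsSMul fun _ => w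
    ratio := fun b => bif b then 1 else y - x
    offset := -y
    hasCorner := ?_
    edge_add_edge := ?_
    edge_add_opposite_edge := ?_ }⟩
  · rintro (_ | _)
    · exact hq.unitsSMul fun _ => sub_pos.2 hlt
    · exact hv
  · rintro (_ | _)
    · simpa [hw] using congrArg ((y - x) • ·) hD
    · simpa using hB
  · simp only [cond_true, cond_false, hw]
    linear_combination (norm := module) -combination + y • hD

theorem nonempty_oppositeCorners (hv : HasCorner S v B) (hq : HasCorner S q D)
    (hpos : ∀ i, 0 < B.coord i (q - v)) : Nonempty (OppositeCorners S) := by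
  obtain ⟨D', hq', hD'⟩ := hq.exists_add_eq (hv.coord_pos hq hpos)
  obtain ⟨B', hv', hB'⟩ := hv.exists_add_eq hpos
  have coord_ne : D'.coord 0 (B' 0) ≠ D'.coord 1 (B' 0) := by
    intro heq
    set x := D'.coord 0 (B' 0) with hx
    have hsum := coord_smul_add_coord_smul D' (B' 0)
    rw [← heq, ← hx] at hsum
    have hzero : B' 0 + x • (B' 0 + B' 1) = 0 := by
      linear_combination (norm := module) -hsum + x • hD' + x • hB'
    have h₀ : 1 + x = 0 := by simpa using congrArg (B'.coord 0) hzero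
    have h₁ : x = 0 := by simpa using congrArg (B'.coord 1) hzero
    simp [h₁] at h₀
  rcases coord_ne.lt_or_gt with hlt | hlt
  · exact hv'.nonempty_oppositeCorners_of_lt hq' hB' hD' hlt
  · exact hv'.nonempty_oppositeCorners_of_lt hq'.swap hB' (by simpa [add_comm] using hD')
      (by simpa using hlt)

end HasCorner

/-- The vector with coordinates `4, -1`: its line meets the corner with edges `B 0, B 1` in the
apex only, and there is the level line of a functional exposing the apex. -/
def slant (B : Basis (Fin 2) ℝ E) : E :=
  (4 : ℝ) • B 0 - B 1

namespace OppositeCorners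

variable (C : OppositeCorners S)

theorem mem (b : Bool) : C.vertex b ∈ S := (C.hasCorner b).mem

theorem exists_radius : ∃ ρ > 0, ∀ b x,
    (∀ i, (C.basis b).coord i (x - C.vertex b) ∈ Set.Icc 0 ρ) → x ∈ S := by
  choose ρ hρ hmem using fun b => (C.hasCorner b).exists_mem
  refine ⟨min (ρ true) (ρ false), lt_min (hρ _) (hρ _), ?_⟩
  rintro (_ | _) x hx
  · exact hmem _ x fun i => ⟨(hx i).1, (hx i).2.trans (min_le_right ..)⟩
  · exact hmem _ x fun i => ⟨(hx i).1, (hx i).2.trans (min_le_left ..)⟩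

theorem ratio_mul_coord (b : Bool) (i : Fin 2) :
    C.ratio b * (C.basis b).coord i (C.vertex (!b) - C.vertex b) = 1 := by
  rw [← smul_eq_mul, ← map_smul, ← C.edge_add_edge]
  fin_cases i <;> simp

theorem vertex_ne : C.vertex true ≠ C.vertex false := fun heq => by
  simpa [heq] using C.ratio_mul_coord true 0

/-- The point with parameter `s` on the small segment through the vertex `b` along the slant,
traversed in opposite senses at the two vertices. -/
def branchPoint (η : ℝ) (b : Bool) (s : ℝ) : E :=
  C.vertex b + (η * turnSign b * s) • slant (C.basis b)

/-- The image of the vertex `b` under the copy that is to cut out of the segment of branch points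
at `b` the interval `turnSign b * (s - μ) ∈ [-h, 4 * h]`. -/
def nodeVertex (η μ h : ℝ) (b : Bool) : E :=
  C.branchPoint η b μ - (4 * η * h) • (C.basis b 0 + C.basis b 1)

/-- The ratio of the copy that takes both vertices to their node vertices. -/
def nodeRatio (η μ h : ℝ) : ℝ :=
  1 + η * (4 * h * (C.ratio true + C.ratio false) -
    μ * (5 * C.offset - C.ratio true + C.ratio false))

theorem nodeVertex_false (η μ h : ℝ) : C.nodeVertex η μ h false =
    C.nodeVertex η μ h true + C.nodeRatio η μ h • (C.vertex false - C.vertex true) := by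
  have h₁ := C.edge_add_edge true
  have h₂ := C.edge_add_edge false
  have h₃ := C.edge_add_opposite_edge
  simp only [Bool.not_true, Bool.not_false] at h₁ h₂
  simp only [nodeVertex, branchPoint, nodeRatio, slant, turnSign_true, turnSign_false]
  linear_combination (norm := module)
    (4 * η * h + η * μ) • h₁ + (-4 * η * h + η * μ) • h₂ + (-5 * η * μ) • h₃

theorem copyAt_nodeVertex (η μ h : ℝ) (b : Bool) :
    copyAt S (C.nodeRatio η μ h) (C.vertex true) (C.nodeVertex η μ h true) =
      copyAt S (C.nodeRatio η μ h) (C.vertex b) (C.nodeVertex η μ h b) := by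
  cases b
  · rw [nodeVertex_false, ← copyAt_eq_copyAt]
  · rfl

theorem branchPoint_sub_nodeVertex (η μ h : ℝ) (b : Bool) (s : ℝ) :
    C.branchPoint η b s - C.nodeVertex η μ h b =
      (4 * η * (turnSign b * (s - μ) + h)) • C.basis b 0 +
        (η * (4 * h - turnSign b * (s - μ))) • C.basis b 1 := by
  simp only [nodeVertex, branchPoint, slant]
  module

theorem abs_nodeRatio_sub_one_le {η μ h : ℝ} (hη : 0 ≤ η) (hμ : |μ| ≤ 1 / 2) (hh₀ : 0 ≤ h)
    (hh₁ : h ≤ 1 / 8) :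
    |C.nodeRatio η μ h - 1| ≤ η * (|C.ratio true + C.ratio false| +
      |5 * C.offset - C.ratio true + C.ratio false|) := by
  rw [nodeRatio, add_sub_cancel_left, abs_mul, abs_of_nonneg hη]
  gcongr
  refine (abs_sub _ _).trans (add_le_add ?_ ?_) <;> rw [abs_mul]
  · refine mul_le_of_le_one_left (abs_nonneg _) ?_
    rw [abs_of_nonneg (by positivity)]
    linarith
  · exact mul_le_of_le_one_left (abs_nonneg _) (by linarith)

theorem branchPoint_mem_copyAt_iff {η μ h s ρ : ℝ} {b : Bool}
    (hρ : ∀ x, (∀ i, (C.basis b).coord i (x - C.vertex b) ∈ Set.Icc 0 ρ) → x ∈ S)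
    (hη : 0 < η) (hηρ : η * 10 ≤ ρ) (hc : 1 / 2 ≤ C.nodeRatio η μ h) (hs : |s| ≤ 1 / 2)
    (hμ : |μ| ≤ 1 / 2) (hh : h ≤ 1 / 8) :
    C.branchPoint η b s ∈
        copyAt S (C.nodeRatio η μ h) (C.vertex true) (C.nodeVertex η μ h true) ↔
      turnSign b * (s - μ) ∈ Set.Icc (-h) (4 * h) := by
  set t := turnSign b * (s - μ)
  have ht : |t| ≤ 1 := by
    rw [abs_mul, abs_turnSign, one_mul]
    linarith [abs_sub s μ]
  obtain ⟨ht₀, ht₁⟩ := abs_le.1 ht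
  have coord_zero : (C.basis b).coord 0 (C.branchPoint η b s - C.nodeVertex η μ h b) =
      4 * η * (t + h) := by
    simp [branchPoint_sub_nodeVertex, t]
  have coord_one : (C.basis b).coord 1 (C.branchPoint η b s - C.nodeVertex η μ h b) =
      η * (4 * h - t) := by
    simp [branchPoint_sub_nodeVertex, t]
  have hcρ : η * 5 ≤ C.nodeRatio η μ h * ρ := by nlinarith
  rw [C.copyAt_nodeVertex η μ h b, (C.hasCorner b).mem_copyAt_iff hρ (by linarith),
    Fin.forall_fin_two, coord_zero, coord_one, mul_nonneg_iff_of_pos_left (by positivity),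
    mul_nonneg_iff_of_pos_left hη, Set.mem_Icc]
  · constructor <;> rintro ⟨h₁, h₂⟩ <;> constructor <;> linarith
  · rw [Fin.forall_fin_two, coord_zero, coord_one]
    constructor <;> nlinarith

end OppositeCorners

end Corners

section CornerCopies

open Module Filter Topology

universe u

variable {E : Type u} [NormedAddCommGroup E] [NormedSpace ℝ E] {S : Set E}

theorem OppositeCorners.exists_scale (C : OppositeCorners S) {ε r : ℝ} (hε : 0 < ε)
    (hr : 0 < r) :
    ∃ η > 0, ∃ ρ, (∀ b x, (∀ i, (C.basis b).coord i (x - C.vertex b) ∈ Set.Icc 0 ρ) → x ∈ S) ∧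
      η * 10 ≤ ρ ∧
      η * (|C.ratio true + C.ratio false| +
        |5 * C.offset - C.ratio true + C.ratio false|) ≤ ε ∧
      ∀ b, η * ‖slant (C.basis b)‖ < r := by
  obtain ⟨ρ, hρ, hmem⟩ := C.exists_radius
  have small (M : ℝ) {δ : ℝ} (hδ : 0 < δ) : ∀ᶠ η in 𝓝[>] (0 : ℝ), η * M < δ :=
    nhdsWithin_le_nhds <|
      ((continuous_mul_const M).tendsto' 0 0 (zero_mul M)).eventually_lt_const hδ
  obtain ⟨η, hη, hηρ, hηε, hηr⟩ := (eventually_mem_nhdsWithin.and <| (small _ hρ).and <|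
    (small _ hε).and <| eventually_all.2 fun b : Bool => small ‖slant (C.basis b)‖ hr).exists
  exact ⟨η, hη, ρ, hmem, hηρ.le, hηε.le, hηr⟩

variable [FiniteDimensional ℝ E]

/-- The functional exposing the apex of a corner with edges `B 0, B 1` that vanishes on
`slant B`. -/
def slantFunctional (B : Basis (Fin 2) ℝ E) : E →L[ℝ] ℝ :=
  -(B.coord 0 + (4 : ℝ) • B.coord 1).toContinuousLinearMap

theorem slantFunctional_apply (B : Basis (Fin 2) ℝ E) (x : E) :
    slantFunctional B x = -(B.coord 0 x + 4 * B.coord 1 x) := rfl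

theorem slantFunctional_slant (B : Basis (Fin 2) ℝ E) :
    slantFunctional B (slant B) = 0 := by
  simp [slantFunctional_apply, slant]

namespace HasCorner

variable {v : E} {B : Basis (Fin 2) ℝ E}

theorem slantFunctional_le (h : HasCorner S v B) {x : E} (hx : x ∈ S) :
    slantFunctional B x ≤ slantFunctional B v := by
  rw [← sub_nonpos, ← map_sub, slantFunctional_apply]
  linarith [h.coord_nonneg x hx 0, h.coord_nonneg x hx 1]

theorem eq_of_slantFunctional_le (h : HasCorner S v B) {x : E} (hx : x ∈ S)
    (hle : slantFunctional B v ≤ slantFunctional B x) : x = v := by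
  rw [← sub_nonneg, ← map_sub, slantFunctional_apply] at hle
  have h₀ := h.coord_nonneg x hx 0
  have h₁ := h.coord_nonneg x hx 1
  rw [← sub_eq_zero, B.forall_coord_eq_zero_iff.symm, Fin.forall_fin_two]
  constructor <;> linarith

end HasCorner

namespace OppositeCorners

variable (C : OppositeCorners S)

theorem exposedPair :
    ExposedPair S C.vertex fun b => slantFunctional (C.basis b) where
  mem := C.mem
  le b _ hx := (C.hasCorner b).slantFunctional_le hx
  eq_of_le b _ hx := (C.hasCorner b).eq_of_slantFunctional_le hx
  ne := C.vertex_ne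

theorem mem_extremePoints (b : Bool) :
    C.vertex b ∈ S.extremePoints ℝ :=
  exposedPoints_subset_extremePoints
    ⟨C.mem b, _, fun x hx => ⟨C.exposedPair.le b x hx, C.exposedPair.eq_of_le b x hx⟩⟩

theorem exists_shortChord (hconv : Convex ℝ S) :
    ∃ z ∈ S, ShortChord S z (C.vertex false - C.vertex true) := by
  obtain ⟨ρ, hρ, hedge⟩ := (C.hasCorner true).exists_add_smul_mem
  set v := C.vertex true
  set B := C.basis true
  set e := C.vertex false - v with he
  have off_line (s : ℝ) : v + ρ • B 0 + s • e ≠ v := by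
    intro heq
    have hzero : ρ • B 0 + s • e = 0 := by linear_combination (norm := module) heq
    have h₀ := congrArg (B.coord 0) hzero
    have h₁ := congrArg (B.coord 1) hzero
    simp only [map_add, map_smul, map_zero, smul_eq_mul, Basis.coord_apply, Basis.repr_self,
      Finsupp.single_eq_same, ne_eq, one_ne_zero, not_false_eq_true,
      Finsupp.single_eq_of_ne] at h₀ h₁
    have r₁ : C.ratio true * B.repr e 1 = 1 := C.ratio_mul_coord true 1
    have hs : s = 0 := by linear_combination C.ratio true * h₁ - s * r₁
    simp only [hs, zero_mul, add_zero, mul_one] at h₀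
    exact hρ.ne' h₀
  have edge_sum : B 0 + B 1 = C.ratio true • e := C.edge_add_edge true
  have midpoint : (1 / 2 : ℝ) • (v + ρ • B 0) + (1 / 2 : ℝ) • (v + ρ • B 1) =
      v + (ρ / 2 * C.ratio true) • e := by
    linear_combination (norm := module) (ρ / 2) • edge_sum
  rcases shortChord_or_shortChord hconv (sub_ne_zero.2 C.vertex_ne.symm)
    (C.mem_extremePoints true) (by simpa [he] using C.mem_extremePoints false) midpoint
    off_line with h | h
  · exact ⟨_, hedge 0, h⟩
  · exact ⟨_, hedge 1, h⟩

theorem branchPoint_mem_levelPieces {η r s : ℝ} {b : Bool} (hη : 0 < η)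
    (hr : η * ‖slant (C.basis b)‖ < r) (hs : |s| ≤ 1 / 2) :
    C.branchPoint η b s ∈ levelPieces C.vertex (fun b => slantFunctional (C.basis b)) r := by
  refine ⟨b, ?_, by simp [branchPoint, slantFunctional_slant]⟩
  rw [branchPoint, dist_self_add_left, norm_smul, norm_mul, norm_mul, Real.norm_eq_abs,
    Real.norm_eq_abs, Real.norm_eq_abs, abs_turnSign, abs_of_pos hη, mul_one]
  refine lt_of_le_of_lt ?_ hr
  gcongr
  exact mul_le_of_le_one_right hη.le (by linarith)

theorem exists_indecomposable (C : OppositeCorners S) (hS : IsCompact S)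
    (hconv : Convex ℝ S) {ε : ℝ} (hε₀ : 0 < ε) (hε₁ : ε ≤ 1 / 2) :
    ∃ (I : Type u) (k : I → Set.Icc (1 - ε) (1 + ε) × E),
      (∀ y, {i | y ∈ copyAt S (k i).1 0 (k i).2}.Infinite) ∧
      ¬ ∃ J : Set I, (∀ y, ∃ i ∈ J, y ∈ copyAt S (k i).1 0 (k i).2) ∧
        ∀ y, ∃ i ∈ Jᶜ, y ∈ copyAt S (k i).1 0 (k i).2 := by
  obtain ⟨z, hz, hshort⟩ := C.exists_shortChord hconv
  obtain ⟨r, hr, havoid⟩ := C.exposedPair.exists_radius_forall_exists_copyAt_disjoint hS hconv hz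
    hshort hε₀ (by linarith)
  obtain ⟨η, hη, ρ, hmem, hηρ, hηε, hηr⟩ := C.exists_scale hε₀ hr
  let x (b : Bool) (f : ℕ → Bool) : E := C.branchPoint η b (cantorPoint f)
  have ratio_mem (p : List Bool) :
      C.nodeRatio η (nodeCenter p) (nodeRadius p) ∈ Set.Icc (1 - ε) (1 + ε) :=
    Set.mem_Icc_iff_abs_le.1 <| (abs_sub_comm _ _).trans_le <| (C.abs_nodeRatio_sub_one_le hη.le
      (abs_nodeCenter_le p) (nodeRadius_pos p).le (nodeRadius_le p)).trans hηε
  let F (k : Set.Icc (1 - ε) (1 + ε) × E) : Set E := copyAt S k.1 0 k.2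
  have surj {c : ℝ} (hc : c ∈ Set.Icc (1 - ε) (1 + ε)) (z y : E) :
      ∃ k, F k = copyAt S c z y :=
    ⟨(⟨c, hc⟩, y + c • (0 - z)), (copyAt_eq_copyAt S c z 0 y).symm⟩
  choose node hnode using fun p => surj (ratio_mem p) (C.vertex true)
    (C.nodeVertex η (nodeCenter p) (nodeRadius p) true)
  have detects : DetectsTurns (fun p => F (node p)) x := fun b f p => by
    change x b f ∈ F (node p) ↔ _
    rw [hnode, C.branchPoint_mem_copyAt_iff (hmem b) hη hηρ (by linarith [(ratio_mem p).1])
      (abs_cantorPoint_le f) (abs_nodeCenter_le p) (nodeRadius_le p),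
      turnSign_mul_cantorPoint_sub_mem_Icc_iff]
  refine detects.exists_indecomposable fun y hy => ?_
  obtain ⟨c, hc, z, hz, hdisj⟩ := havoid (turnPoints x) (by
    rintro _ ⟨b, f, -, rfl⟩
    exact C.branchPoint_mem_levelPieces hη (hηr b) (abs_cantorPoint_le f)) y hy
  obtain ⟨k, hk⟩ := surj ⟨hc.1, by linarith [hc.2]⟩ z y
  exact ⟨k, hk ▸ mem_copyAt_self hz, hk ▸ hdisj⟩

end OppositeCorners

end CornerCopies

section Polygons

open Module

section Module

variable {E : Type*} [AddCommGroup E] [Module ℝ E]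

theorem exists_inv_smul_eq_add_smul (hE : finrank ℝ E = 2) {f : Dual ℝ E} (hf : f ≠ 0) :
    ∃ x₀ u : E, ∀ q, f q ≠ 0 → ∃ s : ℝ, (f q)⁻¹ • q = x₀ + s • u := by
  have : FiniteDimensional ℝ E := .of_finrank_pos (by omega)
  have finrank_ker : finrank ℝ f.ker = 1 := by
    have := Dual.finrank_ker_add_one_of_ne_zero hf
    omega
  obtain ⟨⟨u, _⟩, -, hu⟩ := finrank_eq_one_iff'.1 finrank_ker
  obtain ⟨x₀, hx₀⟩ := LinearMap.surjective hf 1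
  refine ⟨x₀, u, fun q hq => ?_⟩
  have mem_ker : (f q)⁻¹ • q - x₀ ∈ f.ker := by simp [hq, hx₀]
  obtain ⟨s, hs⟩ := hu ⟨_, mem_ker⟩
  exact ⟨s, (sub_eq_iff_eq_add'.1 (congrArg Subtype.val hs).symm)⟩

/-- Scaled to the line `f = 1`, the elements of `Q` are linearly ordered. The extreme ones span the
cone of `Q`. -/
theorem exists_basis_mem_forall_coord_nonneg (hE : finrank ℝ E = 2) {Q : Set E}
    (hfin : Q.Finite) (hQ : Q.Nontrivial)
    (hindep : Q.Pairwise fun p q => LinearIndependent ℝ ![p, q])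
    {f : Dual ℝ E} (hf : ∀ q ∈ Q, 0 < f q) :
    ∃ B : Basis (Fin 2) ℝ E, (∀ i, B i ∈ Q) ∧ ∀ q ∈ Q, ∀ i, 0 ≤ B.coord i q := by
  obtain ⟨w, hw⟩ := hQ.nonempty
  obtain ⟨x₀, u, hslope⟩ := exists_inv_smul_eq_add_smul hE (f := f) fun h => by
    simpa [h] using hf w hw
  choose! s hs using fun q (hq : q ∈ Q) => hslope q (hf q hq).ne'
  obtain ⟨a, ha, hmin⟩ := Set.exists_min_image Q s hfin hQ.nonempty
  obtain ⟨b, hb, hmax⟩ := Set.exists_max_image Q s hfin hQ.nonempty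
  have hab : a ≠ b := by
    rintro rfl
    obtain ⟨p, hp, q, hq, hpq⟩ := hQ
    have heq : s p = s q := by linarith [hmin p hp, hmin q hq, hmax p hp, hmax q hq]
    have hzero : (f p)⁻¹ • p + -(f q)⁻¹ • q = 0 := by
      rw [neg_smul, hs p hp, hs q hq, heq, add_neg_cancel]
    exact inv_ne_zero (hf p hp).ne' (LinearIndependent.pair_iff.1 (hindep hp hq hpq) _ _ hzero).1
  have : FiniteDimensional ℝ E := .of_finrank_pos (by omega)
  let B := basisOfLinearIndependentOfCardEqFinrank (hindep ha hb hab) (by simp [hE])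
  have hB₀ : B 0 = a := by simp [B]
  have hB₁ : B 1 = b := by simp [B]
  refine ⟨B, Fin.forall_fin_two.2 ⟨hB₀ ▸ ha, hB₁ ▸ hb⟩, fun q hq i => ?_⟩
  obtain ⟨α, β, hα, hβ, hαβ, hsq⟩ : s q ∈ segment ℝ (s a) (s b) := by
    rw [segment_eq_Icc (hmin b hb)]
    exact ⟨hmin q hq, hmax q hq⟩
  have combination : (f q)⁻¹ • q = (α * (f a)⁻¹) • B 0 + (β * (f b)⁻¹) • B 1 := by
    rw [hB₀, hB₁, mul_smul, mul_smul, hs a ha, hs b hb, hs q hq, ← hsq, smul_eq_mul, smul_eq_mul]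
    linear_combination (norm := module) -hαβ • x₀
  have hfa := hf a ha
  have hfb := hf b hb
  have coord_nonneg : 0 ≤ B.coord i ((f q)⁻¹ • q) := by
    rw [combination]
    rw [map_add, map_smul, map_smul]
    have coord_basis_nonneg (j : Fin 2) : 0 ≤ B.coord i (B j) := by
      rw [B.coord_apply, B.repr_self, Finsupp.single_apply]
      split <;> norm_num
    exact add_nonneg (mul_nonneg (by positivity) (coord_basis_nonneg 0))
      (mul_nonneg (by positivity) (coord_basis_nonneg 1))
  rwa [map_smul, smul_eq_mul, mul_nonneg_iff_of_pos_left (inv_pos.2 (hf q hq))] at coord_nonneg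

theorem linearIndependent_sub_of_mem_extremePoints {A : Set E} {v p q : E}
    (hv : v ∈ A.extremePoints ℝ) (hp : p ∈ A.extremePoints ℝ) (hq : q ∈ A.extremePoints ℝ)
    (hpv : p ≠ v) (hqv : q ≠ v) (hpq : p ≠ q) :
    LinearIndependent ℝ ![p - v, q - v] := by
  have eq_or_eq {x y z : E} (hx : x ∈ A.extremePoints ℝ) (hy : y ∈ A.extremePoints ℝ)
      (hz : z ∈ A.extremePoints ℝ) (h : Wbtw ℝ x y z) : x = y ∨ z = y :=
    (mem_extremePoints_iff_forall_segment.1 hy).2 x hx.1 z hz.1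
      (affineSegment_eq_segment ℝ x z ▸ h)
  rw [LinearIndependent.pair_iff' (sub_ne_zero.2 hpv)]
  intro t ht
  have hcol : Collinear ℝ {v, p, q} := by
    rw [collinear_iff_of_mem (Set.mem_insert v _)]
    refine ⟨p - v, ?_⟩
    rintro _ (rfl | rfl | rfl)
    · exact ⟨0, by simp⟩
    · exact ⟨1, by simp⟩
    · exact ⟨t, by simp [ht]⟩
  rcases hcol.wbtw_or_wbtw_or_wbtw with h | h | h
  · exact (eq_or_eq hv hp hq h).elim hpv.symm hpq.symm
  · exact (eq_or_eq hp hq hv h).elim hpq hqv.symm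
  · exact (eq_or_eq hq hv hp h).elim hqv hpv

theorem HasCorner.coord_sub_pos {A : Set E} {v q : E} {B : Basis (Fin 2) ℝ E} (h : HasCorner A v B)
    (hv : v ∈ A.extremePoints ℝ) (hB : ∀ i, v + B i ∈ A.extremePoints ℝ)
    (hq : q ∈ A.extremePoints ℝ) (hqv : q ≠ v) (hqB : ∀ i, q ≠ v + B i) (i : Fin 2) :
    0 < B.coord i (q - v) := by
  refine (h.coord_nonneg q hq.1 i).lt_of_ne' fun hzero => ?_
  obtain ⟨j, t, ht⟩ : ∃ j, ∃ t : ℝ, t • B j = q - v := by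
    have sum_eq := coord_smul_add_coord_smul B (q - v)
    match i with
    | 0 => exact ⟨1, _, by rwa [hzero, zero_smul, zero_add] at sum_eq⟩
    | 1 => exact ⟨0, _, by rwa [hzero, zero_smul, add_zero] at sum_eq⟩
  have hindep := linearIndependent_sub_of_mem_extremePoints hv (hB j) hq
    (add_ne_left.2 (B.ne_zero j)) hqv (hqB j).symm
  rw [add_sub_cancel_left, LinearIndependent.pair_iff' (B.ne_zero j)] at hindep
  exact hindep t ht

theorem sub_nonneg_of_mem_convexHull {A : Set E} {f : Dual ℝ E} {v x : E}
    (hA : ∀ p ∈ A, 0 ≤ f (p - v)) (hx : x ∈ convexHull ℝ A) : 0 ≤ f (x - v) := by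
  simp only [map_sub, sub_nonneg] at hA ⊢
  exact convexHull_min hA (convex_halfSpace_ge f.isLinear (f v)) hx

end Module

universe u

variable {E : Type u} [NormedAddCommGroup E] [NormedSpace ℝ E] {P : Finset E}

theorem exists_continuousLinearMap_forall_lt
    (hpos : ∀ p ∈ P, p ∈ Set.extremePoints ℝ (convexHull ℝ (P : Set E))) {v : E} (hv : v ∈ P) :
    ∃ f : E →L[ℝ] ℝ, ∀ p ∈ P, p ≠ v → f v < f p := by
  have notMem : v ∉ convexHull ℝ ((P : Set E) \ {v}) := fun hmem =>
    (((convex_convexHull ℝ (P : Set E)).mem_extremePoints_iff_mem_sdiff_convexHull_sdiff.1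
      (hpos v hv)).2) (convexHull_mono (Set.sdiff_subset_sdiff_left (subset_convexHull ℝ _)) hmem)
  obtain ⟨f, u, hlt, hgt⟩ := geometric_hahn_banach_point_closed (convex_convexHull ℝ _)
    ((P.finite_toSet.sdiff).isClosed_convexHull ℝ) notMem
  exact ⟨f, fun p hp hpv => hlt.trans (hgt p (subset_convexHull ℝ _ ⟨hp, hpv⟩))⟩

theorem exists_hasCorner (hE : finrank ℝ E = 2) (hcard : 3 ≤ P.card)
    (hpos : ∀ p ∈ P, p ∈ Set.extremePoints ℝ (convexHull ℝ (P : Set E))) {v : E} (hv : v ∈ P) :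
    ∃ B : Basis (Fin 2) ℝ E, HasCorner (convexHull ℝ (P : Set E)) v B ∧ ∀ i, v + B i ∈ P := by
  classical
  obtain ⟨f, hf⟩ := exists_continuousLinearMap_forall_lt hpos hv
  let Q : Set E := (· - v) '' (P.erase v)
  have hQ : Q.Nontrivial := by
    refine Set.Nontrivial.image ?_ sub_left_injective
    rw [Finset.nontrivial_coe, ← Finset.one_lt_card_iff_nontrivial, Finset.card_erase_of_mem hv]
    omega
  have hindep : Q.Pairwise fun p q => LinearIndependent ℝ ![p, q] := by
    rintro _ ⟨p, hp, rfl⟩ _ ⟨q, hq, rfl⟩ hpq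
    rw [Finset.mem_coe, Finset.mem_erase] at hp hq
    exact linearIndependent_sub_of_mem_extremePoints (hpos v hv) (hpos p hp.2) (hpos q hq.2) hp.1
      hq.1 (ne_of_apply_ne (· - v) hpq)
  have f_pos : ∀ q ∈ Q, 0 < f q := by
    rintro _ ⟨p, hp, rfl⟩
    rw [Finset.mem_coe, Finset.mem_erase] at hp
    rw [map_sub, sub_pos]
    exact hf p hp.2 hp.1
  obtain ⟨B, hBQ, hnonneg⟩ := exists_basis_mem_forall_coord_nonneg hE
    ((P.erase v).finite_toSet.image _) hQ hindep (f := f) f_pos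
  have edge_mem (i : Fin 2) : v + B i ∈ P := by
    obtain ⟨p, hp, hpB⟩ := hBQ i
    rw [← hpB, add_sub_cancel]
    exact Finset.mem_of_mem_erase hp
  refine ⟨B, .of_convex (convex_convexHull ℝ _) (hpos v hv).1 (fun x hx i => ?_)
    fun i => (hpos _ (edge_mem i)).1, edge_mem⟩
  refine sub_nonneg_of_mem_convexHull (fun p hp => ?_) hx
  obtain rfl | hpv := eq_or_ne p v
  · simp
  · exact hnonneg _ ⟨p, Finset.mem_erase.2 ⟨hpv, hp⟩, rfl⟩ i

theorem nonempty_oppositeCorners_convexHull (hE : finrank ℝ E = 2) (hcard : 4 ≤ P.card)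
    (hpos : ∀ p ∈ P, p ∈ Set.extremePoints ℝ (convexHull ℝ (P : Set E))) :
    Nonempty (OppositeCorners (convexHull ℝ (P : Set E))) := by
  classical
  obtain ⟨v, hv⟩ := Finset.card_pos.1 (by omega : 0 < P.card)
  obtain ⟨B, hcorner, hB⟩ := exists_hasCorner hE (by omega) hpos hv
  obtain ⟨q, hq, hqv⟩ := Finset.exists_mem_notMem_of_card_lt_card
    ((Finset.card_le_three (a := v) (b := v + B 0) (c := v + B 1)).trans_lt hcard)
  simp only [Finset.mem_insert, Finset.mem_singleton, not_or] at hqv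
  obtain ⟨D, hcorner', -⟩ := exists_hasCorner hE (by omega) hpos hq
  exact hcorner.nonempty_oppositeCorners hcorner' <| hcorner.coord_sub_pos (hpos v hv)
    (fun i => hpos _ (hB i)) (hpos q hq) hqv.1 (Fin.forall_fin_two.2 hqv.2)

theorem statement2_general (hE : finrank ℝ E = 2) (hcard : 4 ≤ P.card)
    (hpos : ∀ p ∈ P, p ∈ Set.extremePoints ℝ (convexHull ℝ (P : Set E))) {ε : ℝ} (hε : 0 < ε) :
    ∃ (I : Type u) (c : I → ℝ) (p : I → E), (∀ i, 0 < c i) ∧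
      (∀ i, 1 - ε ≤ c i ∧ c i ≤ 1 + ε) ∧
      (∀ x, {i | x ∈ (fun z => c i • z + p i) '' convexHull ℝ (P : Set E)}.Infinite) ∧
      ¬ ∃ J : Set I,
        (∀ x, ∃ i ∈ J, x ∈ (fun z => c i • z + p i) '' convexHull ℝ (P : Set E)) ∧
        ∀ x, ∃ i ∈ Jᶜ, x ∈ (fun z => c i • z + p i) '' convexHull ℝ (P : Set E) := by
  have : FiniteDimensional ℝ E := .of_finrank_pos (by omega)
  obtain ⟨C⟩ := nonempty_oppositeCorners_convexHull hE hcard hpos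
  obtain ⟨I, k, hinf, hindec⟩ := C.exists_indecomposable (P.finite_toSet.isCompact_convexHull ℝ)
    (convex_convexHull ℝ _) (lt_min hε one_half_pos) (min_le_right ε _)
  simp only [copyAt, sub_zero] at hinf hindec
  refine ⟨I, fun i => (k i).1, fun i => (k i).2, fun i => ?_, fun i => ?_, hinf, hindec⟩
  · linarith [(k i).1.2.1, min_le_right ε (1 / 2)]
  · constructor <;> linarith [(k i).1.2.1, (k i).1.2.2, min_le_left ε (1 / 2)]

end Polygons

theorem statement2 (P : Finset Plane) (hcard : 4 ≤ P.card)
    (hpos : StrictlyConvexPosition P)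
    (S : Set Plane) (hS : S = convexHull ℝ (P : Set Plane))
    (ε : ℝ) (hε : 0 < ε) (m : ℕ) (hm : 1 ≤ m) :
    ∃ (I : Type) (c : I → ℝ) (p : I → Plane),
      (∀ i, 0 < c i) ∧
      (∀ i, 1 - ε ≤ c i ∧ c i ≤ 1 + ε) ∧
      MFoldCover m (fun i => homCopy (c i) (p i) S) Set.univ ∧
      ¬ DecomposableIntoTwoCoverings (fun i => homCopy (c i) (p i) S) := by
  subst hS
  obtain ⟨I, c, p, hc, hcε, hinf, hindec⟩ :=
    statement2_general finrank_euclideanSpace_fin hcard hpos hε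
  refine ⟨I, c, p, hc, hcε, fun x _ => ?_, hindec⟩
  obtain ⟨t, ht, hcard⟩ := (hinf x).exists_subset_card_eq m
  exact ⟨t, hcard.ge, fun i hi => ht hi⟩
end
end

section
/- Let S be the convex hull of a finite set of n ≥ 4 points in ℝ² in strictly convex position. Then there exists a unit vector u ∈ ℝ² such that the maximum of the linear functional x ↦ ⟨u, x⟩ over S is attained at exactly one vertex v_a of S, the minimum is attained at exactly one vertex v_b of S, and v_a and v_b are not adjacent (they are not the two endpoints of a common side of S). -/
/-!
STATEMENT 5: Let S be the convex hull of a finite set of n ≥ 4 points in ℝ²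
in strictly convex position. Then there exists a unit vector u such that the
maximum of x ↦ ⟨u, x⟩ over S is attained at exactly one vertex v_a, the
minimum at exactly one vertex v_b, and v_a, v_b are not adjacent.
-/

noncomputable section

open scoped RealInnerProductSpace

/-- Two vertices of the convex polygon `convexHull ℝ P` are adjacent if they
are distinct and the segment joining them lies on the boundary of the polygon,
i.e. they are the endpoints of a common side. -/
def AdjacentVertices (P : Finset Plane) (x y : Plane) : Prop :=
  x ≠ y ∧ segment ℝ x y ⊆ frontier (convexHull ℝ (P : Set Plane))

/-!
A pair `p`, `q` at maximal distance is strictly antipodal, because each of the discs about `p` and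
`q` through the other point contains the polygon. If the line `p q` has vertices on both of its
sides, then `p q` is a diagonal. Otherwise the polygon lies on one side of that line. Among the
vertices farthest from it let `c` be the last and `d` the first in the direction from `p` to `q`.
Tilting the normal of the line slightly shows that `(c, p)` and `(d, q)` are strictly antipodal.
If neither `c p` nor `q d` is a diagonal, then `c = d`, since otherwise `q d` would be a diagonal of
the trapezoid `p q c d`; so the polygon lies in the triangle `p q c` and has only three vertices.
-/

open Filter Finset Module Topology

section Antipodal

variable {E : Type*} [AddCommGroup E] [Module ℝ E] {f g : E →ₗ[ℝ] ℝ} {s : Set E} {P : Finset E}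
  {a b c x : E}

theorem lt_of_mem_convexHull_of_forall_lt (h : ∀ y ∈ s, y ≠ a → f y < f a)
    (hx : x ∈ convexHull ℝ s) (hxa : x ≠ a) : f x < f a := by
  suffices hconv : Convex ℝ {y | y ≠ a → f y < f a} from convexHull_min h hconv hx hxa
  refine convex_iff_forall_pos.2 fun y hy z hz α β hα hβ hαβ hne ↦ ?_
  have hsum : α * f a + β * f a = f a := by rw [← add_mul, hαβ, one_mul]
  rw [map_add, map_smul, map_smul, smul_eq_mul, smul_eq_mul, ← hsum]
  rcases eq_or_ne y a with rfl | hya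
  · have hzy : z ≠ y := by
      rintro rfl
      exact hne (Convex.combo_self hαβ z)
    gcongr
    exact hz hzy
  · have hz' : f z ≤ f a := by
      rcases eq_or_ne z a with rfl | hza
      exacts [le_rfl, (hz hza).le]
    exact add_lt_add_of_lt_of_le (by gcongr; exact hy hya) (by gcongr)

/-- `a` and `b` are the only points of `s` at which some linear functional attains its maximum and
its minimum over `s`. -/
def IsStrictlyAntipodal (s : Set E) (a b : E) : Prop :=
  ∃ f : E →ₗ[ℝ] ℝ, (∀ x ∈ s, x ≠ a → f x < f a) ∧ ∀ x ∈ s, x ≠ b → f b < f x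

namespace IsStrictlyAntipodal

theorem symm : IsStrictlyAntipodal s a b → IsStrictlyAntipodal s b a := by
  rintro ⟨f, hmax, hmin⟩
  exact ⟨-f, fun x hx hxb ↦ neg_lt_neg (hmin x hx hxb), fun x hx hxa ↦ neg_lt_neg (hmax x hx hxa)⟩

theorem convexHull : IsStrictlyAntipodal s a b → IsStrictlyAntipodal (convexHull ℝ s) a b := by
  rintro ⟨f, hmax, hmin⟩
  refine ⟨f, fun x ↦ lt_of_mem_convexHull_of_forall_lt hmax, fun x hx hxb ↦ ?_⟩
  exact neg_lt_neg_iff.1 <| lt_of_mem_convexHull_of_forall_lt (f := -f)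
    (fun y hy hyb ↦ neg_lt_neg (hmin y hy hyb)) hx hxb

end IsStrictlyAntipodal

theorem eventually_add_mul_lt_of_toLex_lt {r₁ r₂ t₁ t₂ : ℝ}
    (h : toLex (r₁, t₁) < toLex (r₂, t₂)) : ∀ᶠ ε in 𝓝[>] 0, r₁ + ε * t₁ < r₂ + ε * t₂ := by
  rcases Prod.Lex.toLex_lt_toLex.1 h with hr | ⟨hr, ht⟩
  · refine nhdsWithin_le_nhds (ContinuousAt.eventually_lt (by fun_prop) (by fun_prop) ?_)
    simpa using hr
  · filter_upwards [self_mem_nhdsWithin] with ε (hε : 0 < ε)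
    exact add_lt_add_of_le_of_lt hr.le (mul_lt_mul_of_pos_left ht hε)

/-- The functional `g + ε f` with small `ε > 0` orders the finite set `P` lexicographically. -/
theorem isStrictlyAntipodal_of_toLex_lt
    (hmax : ∀ x ∈ P, x ≠ a → toLex (g x, f x) < toLex (g a, f a))
    (hmin : ∀ x ∈ P, x ≠ b → toLex (g b, f b) < toLex (g x, f x)) :
    IsStrictlyAntipodal (P : Set E) a b := by
  have hmax' : ∀ᶠ ε in 𝓝[>] (0 : ℝ), ∀ x ∈ P, x ≠ a → g x + ε * f x < g a + ε * f a :=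
    (eventually_all_finset P).2 fun x hx ↦ eventually_imp_distrib_left.2 fun hxa ↦
      eventually_add_mul_lt_of_toLex_lt (hmax x hx hxa)
  have hmin' : ∀ᶠ ε in 𝓝[>] (0 : ℝ), ∀ x ∈ P, x ≠ b → g b + ε * f b < g x + ε * f x :=
    (eventually_all_finset P).2 fun x hx ↦ eventually_imp_distrib_left.2 fun hxb ↦
      eventually_add_mul_lt_of_toLex_lt (hmin x hx hxb)
  obtain ⟨ε, hεmax, hεmin⟩ := (hmax'.and hmin').exists
  exact ⟨g + ε • f, hεmax, hεmin⟩

theorem exists_toLex_max_isStrictlyAntipodal (hinj : Function.Injective fun x ↦ (g x, f x))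
    (hb : b ∈ P) (hmin : ∀ x ∈ P, x ≠ b → toLex (g b, f b) < toLex (g x, f x)) :
    ∃ a ∈ P, (∀ x ∈ P, toLex (g x, f x) ≤ toLex (g a, f a)) ∧
      IsStrictlyAntipodal (P : Set E) a b := by
  obtain ⟨a, ha, hmax⟩ := P.exists_max_image (fun x ↦ toLex (g x, f x)) ⟨b, hb⟩
  exact ⟨a, ha, hmax, isStrictlyAntipodal_of_toLex_lt
    (fun x hx hxa ↦ (hmax x hx).lt_of_ne fun h ↦ hxa (hinj (toLex_inj.1 h))) hmin⟩

theorem not_collinear_of_convexIndependent (hs : ConvexIndependent ℝ ((↑) : s → E))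
    (ha : a ∈ s) (hb : b ∈ s) (hc : c ∈ s) (hab : a ≠ b) (hac : a ≠ c) (hbc : b ≠ c) :
    ¬ Collinear ℝ {a, b, c} := by
  have hbtw {x y z : E} (hx : x ∈ s) (hy : y ∈ s) (hz : z ∈ s) (h : Wbtw ℝ x y z) :
      y = x ∨ y = z := by
    refine convexIndependent_set_iff_inter_convexHull_subset.1 hs {x, z}
      (Set.pair_subset hx hz) ⟨hy, ?_⟩
    rw [convexHull_pair]
    exact h.mem_segment
  intro h
  rcases h.wbtw_or_wbtw_or_wbtw with h | h | h
  · rcases hbtw ha hb hc h with rfl | rfl <;> contradiction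
  · rcases hbtw hb hc ha h with rfl | rfl <;> contradiction
  · rcases hbtw hc ha hb h with rfl | rfl <;> contradiction

end Antipodal

theorem isStrictlyAntipodal_of_forall_dist_le {E : Type*} [NormedAddCommGroup E]
    [InnerProductSpace ℝ E] {s : Set E} {p q : E} (hp : p ∈ s) (hq : q ∈ s)
    (hdist : ∀ x ∈ s, ∀ y ∈ s, dist x y ≤ dist p q) : IsStrictlyAntipodal s q p := by
  have hpos {x y : E} (hxy : x ≠ y) : 0 < ⟪x - y, x - y⟫ := by
    rw [real_inner_self_eq_norm_sq]
    exact pow_pos (norm_pos_iff.2 (sub_ne_zero.2 hxy)) 2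
  have hle {x y : E} (hx : x ∈ s) (hy : y ∈ s) : ⟪x - y, x - y⟫ ≤ ⟪p - q, p - q⟫ := by
    rw [real_inner_self_eq_norm_sq, real_inner_self_eq_norm_sq, ← dist_eq_norm, ← dist_eq_norm]
    gcongr
    exact hdist x hx y hy
  refine ⟨innerₛₗ ℝ (q - p), fun x hx hxq ↦ ?_, fun x hx hxp ↦ ?_⟩
  · have h₁ := hpos hxq
    have h₂ := hle hx hp
    simp only [innerₛₗ_apply_apply, inner_sub_left, inner_sub_right, real_inner_comm p x,
      real_inner_comm q x, real_inner_comm q p] at h₁ h₂ ⊢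
    linarith
  · have h₁ := hpos hxp
    have h₂ := hle hx hq
    simp only [innerₛₗ_apply_apply, inner_sub_left, inner_sub_right, real_inner_comm p x,
      real_inner_comm q x, real_inner_comm q p] at h₁ h₂ ⊢
    linarith

section TwoDim

variable {E : Type*} [NormedAddCommGroup E] [InnerProductSpace ℝ E] [Fact (finrank ℝ E = 2)]
  (o : Orientation ℝ E (Fin 2)) {f : E →ₗ[ℝ] ℝ} {s t : Set E} {P : Finset E}
  {a b c d p q z : E}

theorem areaForm_smul_add_cyclic (u v w : E) :
    o.areaForm u v • w + o.areaForm v w • u + o.areaForm w u • v = 0 := by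
  refine ext_inner_left ℝ fun y ↦ ?_
  rcases eq_or_ne y 0 with rfl | hy
  · simp only [inner_zero_left]
  refine mul_left_cancel₀ (pow_ne_zero 2 (norm_ne_zero_iff.2 hy)) ?_
  simp only [inner_add_right, inner_smul_right, inner_zero_right]
  linear_combination -⟪y, w⟫ * o.inner_mul_areaForm_sub y u v
    - ⟪y, u⟫ * o.inner_mul_areaForm_sub y v w - ⟪y, v⟫ * o.inner_mul_areaForm_sub y w u

theorem exists_eq_smul_of_areaForm_eq_zero {u v : E} (hu : u ≠ 0) (h : o.areaForm u v = 0) :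
    ∃ r : ℝ, v = r • u := by
  have hcyc := areaForm_smul_add_cyclic o u (o.rightAngleRotation u) v
  rw [o.areaForm_swap v u, h, neg_zero, zero_smul, add_zero,
    o.areaForm_rightAngleRotation_right, o.areaForm_rightAngleRotation_left, neg_smul,
    add_neg_eq_zero] at hcyc
  exact ⟨⟪u, v⟫ / ⟪u, u⟫, by
    rw [div_eq_inv_mul, mul_smul, ← hcyc, inv_smul_smul₀ (inner_self_ne_zero.2 hu)]⟩

theorem injective_areaForm_prodMk {u : E} (hu : f u ≠ 0) :
    Function.Injective fun x ↦ (o.areaForm u x, f x) := by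
  intro x y hxy
  obtain ⟨harea, hf⟩ := Prod.mk.inj hxy
  have hu₀ : u ≠ 0 := by
    rintro rfl
    exact hu (map_zero f)
  obtain ⟨r, hr⟩ := exists_eq_smul_of_areaForm_eq_zero o hu₀
    (by rw [map_sub, sub_eq_zero.2 harea] : o.areaForm u (x - y) = 0)
  have hr₀ : r * f u = 0 := by rw [← smul_eq_mul, ← map_smul, ← hr, map_sub, sub_eq_zero.2 hf]
  rwa [(mul_eq_zero.1 hr₀).resolve_right hu, zero_smul, sub_eq_zero] at hr

/-- Twice the signed area of the triangle `a b c`; it is positive when `c` lies to the left of the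
directed line from `a` to `b`. -/
def twiceArea (a b c : E) : ℝ := o.areaForm (b - a) (c - a)

theorem twiceArea_eq (a b c : E) :
    twiceArea o a b c = o.areaForm a b + o.areaForm b c + o.areaForm c a := by
  simp only [twiceArea, map_sub, LinearMap.sub_apply, o.areaForm_apply_self]
  linear_combination -o.areaForm_swap a c - o.areaForm_swap b a

theorem twiceArea_rotate (a b c : E) : twiceArea o b c a = twiceArea o a b c := by
  rw [twiceArea_eq, twiceArea_eq]
  ring

theorem twiceArea_swap (a b c : E) : twiceArea o b a c = -twiceArea o a b c := by
  simp only [twiceArea_eq]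
  linear_combination o.areaForm_swap b a + o.areaForm_swap a c + o.areaForm_swap c b

theorem twiceArea_left (a b : E) : twiceArea o a b a = 0 := by
  rw [twiceArea, sub_self, map_zero]

theorem twiceArea_right (a b : E) : twiceArea o a b b = 0 :=
  o.areaForm_apply_self _

theorem twiceArea_add_smul {α β : ℝ} (h : α + β = 1) (a b x y : E) :
    twiceArea o a b (α • x + β • y) = α * twiceArea o a b x + β * twiceArea o a b y := by
  have hsub : α • x + β • y - a = α • (x - a) + β • (y - a) := by
    obtain rfl : β = 1 - α := by linarith
    module
  rw [twiceArea, hsub]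
  simp only [map_add, map_smul, smul_eq_mul, twiceArea]

theorem continuous_twiceArea (a b : E) : Continuous (twiceArea o a b) :=
  (o.areaForm' (b - a)).continuous.comp (continuous_id.sub continuous_const)

theorem twiceArea_add_cyclic (a b c z : E) :
    twiceArea o b c z + twiceArea o c a z + twiceArea o a b z = twiceArea o a b c := by
  simp only [twiceArea_eq]
  linear_combination o.areaForm_swap c z + o.areaForm_swap a z + o.areaForm_swap b z

theorem twiceArea_smul_add_cyclic (a b c z : E) :
    twiceArea o b c z • a + twiceArea o c a z • b + twiceArea o a b z • c
      = twiceArea o a b c • z := by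
  have h := areaForm_smul_add_cyclic o (a - z) (b - z) (c - z)
  have hshift (x y : E) : o.areaForm (x - z) (y - z) = twiceArea o x y z := by
    rw [← twiceArea_rotate, ← twiceArea_rotate, twiceArea]
  rw [hshift, hshift, hshift] at h
  rw [← twiceArea_add_cyclic o a b c z, ← sub_eq_zero, ← h]
  module

theorem mem_of_twiceArea_nonneg (hs : Convex ℝ s) (ha : a ∈ s) (hb : b ∈ s) (hc : c ∈ s)
    (habc : 0 < twiceArea o a b c) (hbcz : 0 ≤ twiceArea o b c z) (hcaz : 0 ≤ twiceArea o c a z)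
    (habz : 0 ≤ twiceArea o a b z) : z ∈ s := by
  have hsum := twiceArea_add_cyclic o a b c z
  have hmem : univ.centerMass ![twiceArea o b c z, twiceArea o c a z, twiceArea o a b z] ![a, b, c]
      ∈ s := by
    refine hs.centerMass_mem ?_ ?_ ?_
    · simp [Fin.forall_fin_succ, hbcz, hcaz, habz]
    · simpa [Fin.sum_univ_three, hsum] using habc
    · simp [Fin.forall_fin_succ, ha, hb, hc]
  simpa [centerMass, Fin.sum_univ_three, hsum, twiceArea_smul_add_cyclic,
    inv_smul_smul₀ habc.ne'] using hmem

theorem collinear_of_twiceArea_eq_zero (h : twiceArea o a b c = 0) : Collinear ℝ {a, b, c} := by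
  rcases eq_or_ne a b with rfl | hab
  · simpa using collinear_pair ℝ a c
  obtain ⟨r, hr⟩ := exists_eq_smul_of_areaForm_eq_zero o (sub_ne_zero.2 hab.symm) h
  refine (collinear_iff_of_mem (Set.mem_insert a _)).2 ⟨b - a, ?_⟩
  rintro x (rfl | rfl | rfl)
  exacts [⟨0, by simp⟩, ⟨1, by simp⟩, ⟨r, by simp [← hr]⟩]

/-- The line through `a` and `b` has points of `s` strictly on both of its sides. When `a` and `b`
are vertices of a convex polygon with vertex set `s`, this says that `a b` is a diagonal. -/
def IsDiagonal (s : Set E) (a b : E) : Prop :=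
  (∃ c ∈ s, 0 < twiceArea o a b c) ∧ ∃ d ∈ s, twiceArea o a b d < 0

namespace IsDiagonal

theorem ne (h : IsDiagonal o s a b) : a ≠ b := by
  rintro rfl
  obtain ⟨⟨c, -, hc⟩, -⟩ := h
  rw [twiceArea_rotate, twiceArea_right] at hc
  exact hc.false

theorem mono (hst : s ⊆ t) : IsDiagonal o s a b → IsDiagonal o t a b := by
  rintro ⟨⟨c, hc, habc⟩, d, hd, habd⟩
  exact ⟨⟨c, hst hc, habc⟩, d, hst hd, habd⟩

/-- The triangles `a b c` and `b a d` together cover a neighbourhood of each point of the open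
segment. -/
theorem openSegment_subset_interior (h : IsDiagonal o s a b) (hs : Convex ℝ s)
    (ha : a ∈ s) (hb : b ∈ s) : openSegment ℝ a b ⊆ interior s := by
  obtain ⟨⟨c, hc, habc⟩, d, hd, habd⟩ := h
  rw [← neg_pos, ← twiceArea_swap] at habd
  rintro x ⟨α, β, hα, hβ, hαβ, rfl⟩
  set x := α • a + β • b
  have hnhds {u v : E} (h : 0 < twiceArea o u v x) : ∀ᶠ z in 𝓝 x, 0 < twiceArea o u v z :=
    continuousAt_const.eventually_lt (continuous_twiceArea o u v).continuousAt h
  have hbc : 0 < twiceArea o b c x := by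
    rw [twiceArea_add_smul o hαβ, twiceArea_rotate, twiceArea_left, mul_zero, add_zero]
    exact mul_pos hα habc
  have hca : 0 < twiceArea o c a x := by
    rw [twiceArea_add_smul o hαβ, twiceArea_right, mul_zero, zero_add]
    exact mul_pos hβ (by rwa [twiceArea_rotate, twiceArea_rotate])
  have had : 0 < twiceArea o a d x := by
    rw [twiceArea_add_smul o hαβ, twiceArea_left, twiceArea_rotate, mul_zero, zero_add]
    exact mul_pos hβ habd
  have hdb : 0 < twiceArea o d b x := by
    rw [twiceArea_add_smul o hαβ, twiceArea_right, mul_zero, add_zero]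
    exact mul_pos hα (by rwa [twiceArea_rotate, twiceArea_rotate])
  rw [mem_interior_iff_mem_nhds]
  filter_upwards [hnhds hbc, hnhds hca, hnhds had, hnhds hdb] with z hbcz hcaz hadz hdbz
  rcases le_total 0 (twiceArea o a b z) with habz | habz
  · exact mem_of_twiceArea_nonneg o hs ha hb hc habc hbcz.le hcaz.le habz
  · refine mem_of_twiceArea_nonneg o hs hb ha hd habd hadz.le hdbz.le ?_
    rwa [twiceArea_swap, neg_nonneg]

end IsDiagonal

theorem exists_twiceArea_ne_zero (hcard : 3 ≤ #P) (hP : ConvexIndependent ℝ ((↑) : P → E))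
    (ha : a ∈ P) (hb : b ∈ P) (hab : a ≠ b) : ∃ c ∈ P, twiceArea o a b c ≠ 0 := by
  classical
  obtain ⟨c, hc, hc'⟩ := exists_mem_notMem_of_card_lt_card (card_le_two.trans_lt hcard :
    #{a, b} < #P)
  rw [mem_insert, mem_singleton, not_or] at hc'
  exact ⟨c, hc, fun h ↦ not_collinear_of_convexIndependent hP ha hb hc hab (Ne.symm hc'.1)
    (Ne.symm hc'.2) (collinear_of_twiceArea_eq_zero o h)⟩

theorem card_le_three_of_forall_twiceArea_nonneg
    (hP : ConvexIndependent ℝ ((↑) : P → E)) (ha : a ∈ P) (hb : b ∈ P) (hc : c ∈ P)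
    (habc : 0 < twiceArea o a b c) (hab : ∀ x ∈ P, 0 ≤ twiceArea o a b x)
    (hbc : ∀ x ∈ P, 0 ≤ twiceArea o b c x) (hca : ∀ x ∈ P, 0 ≤ twiceArea o c a x) : #P ≤ 3 := by
  classical
  have hvert : ({a, b, c} : Set E) ⊆ P := by
    simp [Set.insert_subset_iff, ha, hb, hc]
  suffices hsub : P ⊆ {a, b, c} from (card_le_card hsub).trans card_le_three
  intro x hx
  have hx' : x ∈ convexHull ℝ {a, b, c} :=
    mem_of_twiceArea_nonneg o (convex_convexHull ℝ _) (subset_convexHull ℝ _ (by simp))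
      (subset_convexHull ℝ _ (by simp)) (subset_convexHull ℝ _ (by simp)) habc
      (hbc x hx) (hca x hx) (hab x hx)
  simpa using convexIndependent_set_iff_inter_convexHull_subset.1 hP _ hvert ⟨hx, hx'⟩

/-- If `p q c d` is a trapezoid with `p q` and `d c` parallel and equally directed, then `q d` is
one of its diagonals. -/
theorem twiceArea_neg_of_twiceArea_eq (hcd : twiceArea o p q c = twiceArea o p q d)
    (hd : 0 < twiceArea o p q d) (hpq : f p < f q) (hdc : f d < f c) : twiceArea o q d c < 0 := by
  have hpar : o.areaForm (c - d) (q - p) = 0 := by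
    rw [o.areaForm_swap, ← sub_sub_sub_cancel_right c d p, map_sub, ← twiceArea, ← twiceArea, hcd,
      sub_self, neg_zero]
  have hpqd : o.areaForm (q - p) (d - q) = twiceArea o p q d := by
    rw [← sub_sub_sub_cancel_right d q p, map_sub, o.areaForm_apply_self, sub_zero, twiceArea]
  have hqdc : o.areaForm (d - q) (c - d) = twiceArea o q d c := by
    rw [← sub_sub_sub_cancel_right c d q, map_sub, o.areaForm_apply_self, sub_zero, twiceArea]
  have hcyc := congrArg f (areaForm_smul_add_cyclic o (q - p) (d - q) (c - d))
  rw [hpar, hpqd, hqdc, zero_smul, add_zero, map_add, map_smul, map_smul, map_sub, map_sub,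
    map_zero, smul_eq_mul, smul_eq_mul] at hcyc
  have := mul_pos hd (sub_pos.2 hdc)
  exact neg_of_mul_neg_left (by linarith) (sub_pos.2 hpq).le

/-- If neither is a diagonal, then `c = d` and `P` lies in the triangle `p q c`. -/
theorem isDiagonal_or_isDiagonal_of_twiceArea_eq (hcard : 4 ≤ #P)
    (hP : ConvexIndependent ℝ ((↑) : P → E)) (hp : p ∈ P) (hq : q ∈ P) (hc : c ∈ P)
    (hside : ∀ x ∈ P, 0 ≤ twiceArea o p q x) (hcd : twiceArea o p q c = twiceArea o p q d)
    (hd₀ : 0 < twiceArea o p q d) (hpq : f p < f q) (hdc : f d ≤ f c) :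
    IsDiagonal o (P : Set E) c p ∨ IsDiagonal o (P : Set E) q d := by
  have hcpq : 0 < twiceArea o c p q := by rwa [twiceArea_rotate, twiceArea_rotate, hcd]
  by_contra! hno
  have hcpx : ∀ x ∈ P, 0 ≤ twiceArea o c p x := by
    by_contra! hneg
    exact hno.1 ⟨⟨q, hq, hcpq⟩, hneg⟩
  have hqdx : ∀ x ∈ P, 0 ≤ twiceArea o q d x := by
    by_contra! hneg
    exact hno.2 ⟨⟨p, hp, by rwa [twiceArea_rotate]⟩, hneg⟩
  have hfcd : f c = f d := hdc.antisymm' <| not_lt.1 fun hlt ↦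
    (twiceArea_neg_of_twiceArea_eq o hcd hd₀ hpq hlt).not_ge (hqdx c hc)
  have hf : f (q - p) ≠ 0 := by
    rw [map_sub]
    exact (sub_pos.2 hpq).ne'
  have hg : o.areaForm (q - p) c = o.areaForm (q - p) d := by
    rwa [twiceArea, twiceArea, map_sub (o.areaForm _), map_sub (o.areaForm _), sub_left_inj] at hcd
  obtain rfl : c = d := injective_areaForm_prodMk o hf (Prod.ext hg hfcd)
  have := card_le_three_of_forall_twiceArea_nonneg o hP hp hq hc hd₀ hside hqdx hcpx
  lia

theorem exists_isDiagonal_of_forall_twiceArea_nonneg (hcard : 4 ≤ #P)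
    (hP : ConvexIndependent ℝ ((↑) : P → E)) (hp : p ∈ P) (hq : q ∈ P) (hpq : p ≠ q)
    (hanti : IsStrictlyAntipodal (P : Set E) q p) (hside : ∀ x ∈ P, 0 ≤ twiceArea o p q x) :
    ∃ a ∈ P, ∃ b ∈ P, IsStrictlyAntipodal (P : Set E) a b ∧ IsDiagonal o (P : Set E) a b := by
  obtain ⟨f, hfq, hfp⟩ := hanti
  have hf : f p < f q := hfq p hp hpq
  have hf₀ : f (q - p) ≠ 0 := by
    rw [map_sub]
    exact (sub_pos.2 hf).ne'
  set g := o.areaForm (q - p) with hg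
  have harea (x : E) : twiceArea o p q x = g x - g p := map_sub g x p
  have hgp : ∀ x ∈ P, g p ≤ g x := fun x hx ↦ sub_nonneg.1 (harea x ▸ hside x hx)
  have hgpq : g q = g p := sub_eq_zero.1 (harea q ▸ twiceArea_right o p q)
  -- `c` and `d` are the points farthest from the line `p q`, with ties broken in the direction of
  -- `q` for `c` and in the direction of `p` for `d`.
  obtain ⟨c, hc, hcmax, hcp⟩ := exists_toLex_max_isStrictlyAntipodal
    (injective_areaForm_prodMk o hf₀) hp fun x hx hxp ↦
      Prod.Lex.toLex_lt_toLex'.2 ⟨hgp x hx, fun _ ↦ hfp x hx hxp⟩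
  obtain ⟨d, hd, hdmax, hdq⟩ := exists_toLex_max_isStrictlyAntipodal
    (injective_areaForm_prodMk (f := -f) o (neg_ne_zero.2 hf₀)) hq fun x hx hxq ↦
      Prod.Lex.toLex_lt_toLex'.2 ⟨hgpq ▸ hgp x hx, fun _ ↦ neg_lt_neg (hfq x hx hxq)⟩
  rw [← hg] at hcmax hdmax
  obtain ⟨hgdc, hfdc⟩ := Prod.Lex.toLex_le_toLex'.1 (hcmax d hd)
  have hgcd : g c = g d := (Prod.Lex.toLex_le_toLex'.1 (hdmax c hc)).1.antisymm hgdc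
  have hcd : twiceArea o p q c = twiceArea o p q d := by rw [harea, harea, hgcd]
  have hd₀ : 0 < twiceArea o p q d := by
    obtain ⟨z, hz, hpqz⟩ := exists_twiceArea_ne_zero o (by lia) hP hp hq hpq
    calc 0 < twiceArea o p q z := (hside z hz).lt_of_ne' hpqz
      _ = g z - g p := harea z
      _ ≤ g d - g p := sub_le_sub_right (Prod.Lex.toLex_le_toLex'.1 (hdmax z hz)).1 _
      _ = twiceArea o p q d := (harea d).symm
  rcases isDiagonal_or_isDiagonal_of_twiceArea_eq o hcard hP hp hq hc hside hcd hd₀ hf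
    (hfdc hgcd.symm) with hdiag | hdiag
  exacts [⟨c, hc, p, hp, hcp, hdiag⟩, ⟨q, hq, d, hd, hdq.symm, hdiag⟩]

theorem exists_isStrictlyAntipodal_isDiagonal (hcard : 4 ≤ #P)
    (hP : ConvexIndependent ℝ ((↑) : P → E)) :
    ∃ a ∈ P, ∃ b ∈ P, IsStrictlyAntipodal (P : Set E) a b ∧ IsDiagonal o (P : Set E) a b := by
  obtain ⟨x, hx, y, hy, hxy⟩ := one_lt_card.1 (by lia : 1 < #P)
  obtain ⟨⟨p, q⟩, hmem, hmax⟩ :=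
    (P ×ˢ P).exists_max_image (fun z ↦ dist z.1 z.2) ⟨(x, y), mk_mem_product hx hy⟩
  obtain ⟨hp, hq⟩ := mem_product.1 hmem
  have hdist : ∀ x ∈ P, ∀ y ∈ P, dist x y ≤ dist p q := fun x hx y hy ↦
    hmax (x, y) (mk_mem_product hx hy)
  have hpq : p ≠ q := dist_pos.1 ((dist_pos.2 hxy).trans_le (hdist x hx y hy))
  have hanti : IsStrictlyAntipodal (P : Set E) q p :=
    isStrictlyAntipodal_of_forall_dist_le hp hq hdist
  by_cases hdiag : IsDiagonal o (P : Set E) q p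
  · exact ⟨q, hq, p, hp, hanti, hdiag⟩
  rw [IsDiagonal, not_and_or] at hdiag
  push Not at hdiag
  rcases hdiag with hside | hside
  · refine exists_isDiagonal_of_forall_twiceArea_nonneg o hcard hP hp hq hpq hanti fun x hx ↦ ?_
    rw [twiceArea_swap]
    exact neg_nonneg.2 (hside x hx)
  · exact exists_isDiagonal_of_forall_twiceArea_nonneg o hcard hP hq hp hpq.symm hanti.symm hside

end TwoDim

theorem IsStrictlyAntipodal.exists_norm_eq_one {E : Type*} [NormedAddCommGroup E]
    [InnerProductSpace ℝ E] [FiniteDimensional ℝ E] {s : Set E} {a b : E}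
    (h : IsStrictlyAntipodal s a b) (hb : b ∈ s) (hab : a ≠ b) :
    ∃ u : E, ‖u‖ = 1 ∧ (∀ x ∈ s, x ≠ a → ⟪u, x⟫ < ⟪u, a⟫) ∧ ∀ x ∈ s, x ≠ b → ⟪u, b⟫ < ⟪u, x⟫ := by
  obtain ⟨f, hmax, hmin⟩ := h
  set w := (InnerProductSpace.toDual ℝ E).symm f.toContinuousLinearMap
  have hw (x : E) : ⟪w, x⟫ = f x := InnerProductSpace.toDual_symm_apply
  simp only [← hw] at hmax hmin
  have hw₀ : w ≠ 0 := by
    intro h₀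
    simpa [h₀] using hmax b hb hab.symm
  have hpos : 0 < ‖w‖⁻¹ := inv_pos.2 (norm_pos_iff.2 hw₀)
  refine ⟨‖w‖⁻¹ • w, norm_smul_inv_norm (𝕜 := ℝ) hw₀, fun x hx hxa ↦ ?_, fun x hx hxb ↦ ?_⟩ <;>
    rw [real_inner_smul_left, real_inner_smul_left]
  exacts [mul_lt_mul_of_pos_left (hmax x hx hxa) hpos, mul_lt_mul_of_pos_left (hmin x hx hxb) hpos]

theorem statement5_general {E : Type*} [NormedAddCommGroup E] [InnerProductSpace ℝ E]
    [Fact (finrank ℝ E = 2)] (P : Finset E) (hcard : 4 ≤ #P)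
    (hP : ConvexIndependent ℝ ((↑) : P → E)) :
    ∃ u : E, ‖u‖ = 1 ∧ ∃ va ∈ P, ∃ vb ∈ P,
      (∀ x ∈ convexHull ℝ (P : Set E), x ≠ va → ⟪u, x⟫ < ⟪u, va⟫) ∧
      (∀ x ∈ convexHull ℝ (P : Set E), x ≠ vb → ⟪u, vb⟫ < ⟪u, x⟫) ∧
      openSegment ℝ va vb ⊆ interior (convexHull ℝ (P : Set E)) := by
  have : FiniteDimensional ℝ E := .of_fact_finrank_eq_two
  let o := (finBasisOfFinrankEq ℝ E (Fact.out : finrank ℝ E = 2)).orientation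
  obtain ⟨a, ha, b, hb, hanti, hdiag⟩ := exists_isStrictlyAntipodal_isDiagonal o hcard hP
  have hsub := subset_convexHull ℝ (P : Set E)
  obtain ⟨u, hu, hmax, hmin⟩ := hanti.convexHull.exists_norm_eq_one (hsub hb) (hdiag.ne o)
  exact ⟨u, hu, a, ha, b, hb, hmax, hmin,
    (hdiag.mono o hsub).openSegment_subset_interior o (convex_convexHull ℝ _) (hsub ha) (hsub hb)⟩

instance fact_finrank_plane : Fact (finrank ℝ Plane = 2) :=
  ⟨finrank_euclideanSpace_fin⟩

theorem StrictlyConvexPosition.convexIndependent {P : Finset Plane}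
    (hpos : StrictlyConvexPosition P) : ConvexIndependent ℝ ((↑) : P → Plane) :=
  (convex_convexHull ℝ (P : Set Plane)).convexIndependent_extremePoints.mono hpos

theorem not_adjacentVertices_of_openSegment_subset_interior {P : Finset Plane} {x y : Plane}
    (h : openSegment ℝ x y ⊆ interior (convexHull ℝ (P : Set Plane))) :
    ¬ AdjacentVertices P x y := by
  rintro ⟨-, hfrontier⟩
  have hmid : midpoint ℝ x y ∈ openSegment ℝ x y := midpoint_mem_openSegment x y
  exact (hfrontier (openSegment_subset_segment ℝ x y hmid)).2 (h hmid)

theorem statement5 (P : Finset Plane) (hcard : 4 ≤ P.card)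
    (hpos : StrictlyConvexPosition P)
    (S : Set Plane) (hS : S = convexHull ℝ (P : Set Plane)) :
    ∃ u : Plane, ‖u‖ = 1 ∧
      ∃ va ∈ P, ∃ vb ∈ P,
        (∀ x ∈ S, x ≠ va → ⟪u, x⟫ < ⟪u, va⟫) ∧
        (∀ x ∈ S, x ≠ vb → ⟪u, vb⟫ < ⟪u, x⟫) ∧
        ¬ AdjacentVertices P va vb := by
  subst hS
  obtain ⟨u, hu, va, ha, vb, hb, hmax, hmin, hint⟩ :=
    statement5_general P hcard hpos.convexIndependent
  exact ⟨u, hu, va, ha, vb, hb, hmax, hmin,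
    not_adjacentVertices_of_openSegment_subset_interior hint⟩
end
end
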